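/- Let N ≥ 2, 1 < p ≤ N and p − 1 < q < q_c, and let Ω ⊆ ℝ^N be a bounded open set containing 0. Let u₁ and u₂ be strong solutions of (E) on Ω ∖ {0}, nonnegative there, continuous on \overline{Ω} ∖ {0}, and equal on ∂Ω. Assume that either (a) there exists k ≥ 0 such that lim_{x→0} u_i(x)/μ_p(x) = k for i = 1, 2, or (b) lim_{x→0} |x|^{β_q} u_i(x) = λ_{N,p,q} for i = 1, 2. Then u₁ = u₂ on Ω ∖ {0}. -/

import Mathlib

open Metric Set Filter Topology MeasureTheory

/-- The vector field `x ↦ |∇u(x)|^{p-2} ∇u(x)`. -/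
noncomputable def pGradField {N : ℕ} (p : ℝ) (u : EuclideanSpace ℝ (Fin N) → ℝ)
    (x : EuclideanSpace ℝ (Fin N)) : EuclideanSpace ℝ (Fin N) :=
  ‖gradient u x‖ ^ (p - 2) • gradient u x

/-- A strong solution of `(E) : -Δ_p u + |∇u|^q = 0` on an open set `G ⊆ ℝ^N`. -/
def IsStrongSolution {N : ℕ} (p q : ℝ) (G : Set (EuclideanSpace ℝ (Fin N)))
    (u : EuclideanSpace ℝ (Fin N) → ℝ) : Prop :=
  ContDiffOn ℝ 1 u G ∧
  ContDiffOn ℝ 3 u {x | x ∈ G ∧ gradient u x ≠ 0} ∧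
  ∀ x ∈ G, DifferentiableAt ℝ (pGradField p u) x ∧
    LinearMap.trace ℝ (EuclideanSpace ℝ (Fin N))
      (fderiv ℝ (pGradField p u) x : EuclideanSpace ℝ (Fin N) →ₗ[ℝ] EuclideanSpace ℝ (Fin N))
      = ‖gradient u x‖ ^ q

/-- The fundamental solution of the p-Laplacian in `ℝ^N`. -/
noncomputable def mup (N : ℕ) (p : ℝ) (x : EuclideanSpace ℝ (Fin N)) : ℝ :=
  if p < N then ((p - 1) / ((N : ℝ) - p)) * ‖x‖ ^ ((p - (N : ℝ)) / (p - 1))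
  else -Real.log ‖x‖

/-!
Where `∇u ≠ 0`, equation (E) reads `tr D²u + (p - 2) ⟪D²u ν, ν⟫ = |∇u|^s` with `ν = ∇u / |∇u|` and
`s = q - p + 2 > 1`. Hence for `c > 1` the multiple `c u` satisfies the same equation with the
smaller coefficient `c^(1-s)` in front of `|∇u|^s`, and no translate of a solution can touch it
from below at noncritical points. Sliding one function over the other then shows that at an interior
maximum of `u₂ - c u₁` both functions are locally extremal, hence locally constant by the strong
minimum principle, and the set of maximum points would be open and compact.

It remains to control the origin. If the weighted limit of the `uᵢ` is positive, then `u₂ ≤ c u₁`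
near the origin. If it is zero, comparison with `ε μ_p` shows that the solutions are bounded near
the origin, and in the subcritical range there are strict subsolutions tending to `-∞` at the
origin, which make an isolated singularity invisible to the comparison. In both cases
`u₂ ≤ c u₁`, and `c → 1`.
-/

open NormedSpace (normalize norm_smul_normalize norm_normalize_eq_one_iff)

section Contact

/-- The graph of a vertical translate of `U (a + ·)` touches that of `V (b + ·)` from below
at the origin. -/
def IsContact {E : Type*} [AddMonoid E] [TopologicalSpace E] (U V : E → ℝ) (a b : E) : Prop :=
  IsLocalMax (fun ζ => U (a + ζ) - V (b + ζ)) 0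

lemma isContact_neg_neg_iff {E : Type*} [AddMonoid E] [TopologicalSpace E] {U V : E → ℝ} {a b : E} :
    IsContact (fun x => -V x) (fun x => -U x) b a ↔ IsContact U V a b := by
  simp only [IsContact, neg_sub_neg]

lemma eventually_forall_add_sub_lt {E : Type*} [TopologicalSpace E] [AddMonoid E]
    [ContinuousAdd E] {D S : Set E} {U V : E → ℝ} {m : ℝ} (hD : IsOpen D)
    (hU : UpperSemicontinuousOn U D) (hV : LowerSemicontinuousOn V D) (hS : IsCompact S)
    (hSD : S ⊆ D) (hlt : ∀ x ∈ S, U x - V x < m) :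
    ∀ᶠ z in 𝓝 (0 : E), ∀ x ∈ S, U (x + z) - V x < m := by
  refine hS.eventually_forall_of_forall_eventually fun x hx => ?_
  obtain ⟨d, hd, hdm⟩ : ∃ d, 0 < d ∧ U x - V x + 2 * d < m :=
    ⟨(m - (U x - V x)) / 4, by linarith [hlt x hx], by linarith [hlt x hx]⟩
  have hUx : ∀ᶠ y in 𝓝 x, U y < U x + d := by
    simpa only [hD.nhdsWithin_eq (hSD hx)] using hU x (hSD hx) (U x + d) (by linarith)
  have hVx : ∀ᶠ y in 𝓝 x, V x - d < V y := by
    simpa only [hD.nhdsWithin_eq (hSD hx)] using hV x (hSD hx) (V x - d) (by linarith)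
  have hadd : Tendsto (fun q : E × E => q.2 + q.1) (𝓝 (0, x)) (𝓝 x) := by
    simpa using (by fun_prop : Continuous fun q : E × E => q.2 + q.1).tendsto (0, x)
  filter_upwards [hadd.eventually hUx, (continuous_snd.tendsto (0, x)).eventually hVx] with q h1 h2
  linarith

variable {E : Type*} [NormedAddCommGroup E] [NormedSpace ℝ E]

/-- Whenever `U` touches a proper translate of `V` from below within `D`, one of the two points
of contact is critical. -/
def OnlyCriticalContacts (U V : E → ℝ) (D : Set E) : Prop :=
  ∀ a ∈ D, ∀ b ∈ D, a ≠ b → IsContact U V a b →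
    HasFDerivAt U (0 : E →L[ℝ] ℝ) a ∨ HasFDerivAt V (0 : E →L[ℝ] ℝ) b

lemma not_hasFDerivAt_zero_of_eventually_le {f : E → ℝ} {a w : E} {e : ℝ} (he : 0 < e)
    (h : ∀ᶠ t : ℝ in 𝓝[>] 0, e * t ≤ |f (a + t • w) - f a|) :
    ¬ HasFDerivAt f (0 : E →L[ℝ] ℝ) a := fun hf => by
  have hline : HasDerivAt (fun t : ℝ => f (a + t • w)) 0 0 := by
    have hf' : HasFDerivAt f (0 : E →L[ℝ] ℝ) (a + (0 : ℝ) • w) := by simpa using hf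
    exact hf'.comp_hasDerivAt (0 : ℝ) (((hasDerivAt_id (0 : ℝ)).smul_const w).const_add a)
  have hsmall := (hasDerivAt_iff_isLittleO.1 hline).def (half_pos he)
  obtain ⟨t, ⟨hle, hlt⟩, ht⟩ :=
    ((h.and (hsmall.filter_mono nhdsWithin_le_nhds)).and self_mem_nhdsWithin).exists
  have ht : 0 < t := ht
  simp only [zero_smul, add_zero, sub_zero, smul_zero, Real.norm_eq_abs, abs_of_pos ht] at hlt
  linarith [mul_pos he ht]

-- Sliding `U` along `z` while paying `e` per unit of time: the penalty forces both `U` and `V`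
-- to have nonzero slope along `z` at a maximum reached at a positive time.
lemma OnlyCriticalContacts.false_of_isMaxOn_slide {C D : Set E} {U V : E → ℝ}
    (hUV : OnlyCriticalContacts U V D) {x z : E} {t e : ℝ} (hC : C ∈ 𝓝 x) (hx : x ∈ D)
    (hxt : x + t • z ∈ D) (hz : z ≠ 0) (he : 0 < e) (ht0 : 0 < t) (ht1 : t ≤ 1)
    (hmax : ∀ y ∈ C, ∀ τ ∈ Icc (0 : ℝ) 1,
      U (y + τ • z) - V y - e * τ ≤ U (x + t • z) - V x - e * t) : False := by
  have htime : ∀ᶠ h in 𝓝[>] (0 : ℝ), 0 < h ∧ t - h ∈ Icc (0 : ℝ) 1 := by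
    filter_upwards [Ioo_mem_nhdsGT ht0] with h hh
    exact ⟨hh.1, by linarith [hh.2], by linarith [hh.1]⟩
  have hcontact : IsContact U V (x + t • z) x := by
    have htend : Tendsto (x + ·) (𝓝 0) (𝓝 x) := (map_add_left_nhds_zero x).le
    filter_upwards [htend.eventually hC] with ζ hζ
    have := hmax (x + ζ) hζ t ⟨ht0.le, ht1⟩
    rw [add_right_comm] at this
    simp only [add_zero]
    linarith
  rcases hUV _ hxt x hx (by simp [hz, ht0.ne']) hcontact with hd | hd
  · refine not_hasFDerivAt_zero_of_eventually_le (w := -z) he ?_ hd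
    filter_upwards [htime] with h hh
    have hle := hmax x (mem_of_mem_nhds hC) (t - h) hh.2
    rw [sub_smul, sub_eq_add_neg (t • z), ← smul_neg, ← add_assoc] at hle
    exact le_abs.2 (Or.inr (by linarith))
  · have hshift : Tendsto (fun h : ℝ => x + h • z) (𝓝[>] 0) (𝓝 x) :=
      tendsto_nhdsWithin_of_tendsto_nhds
        (by simpa using (by fun_prop : Continuous fun h : ℝ => x + h • z).tendsto 0)
    refine not_hasFDerivAt_zero_of_eventually_le (w := z) he ?_ hd
    filter_upwards [htime, hshift.eventually hC] with h hh hhC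
    have hle := hmax _ hhC (t - h) hh.2
    rw [add_assoc, ← add_smul, add_sub_cancel] at hle
    exact le_abs.2 (Or.inl (by linarith))

lemma OnlyCriticalContacts.add_sub_le {C D : Set E} {U V : E → ℝ} {m : ℝ} {z : E}
    (hUV : OnlyCriticalContacts U V D) (hC : IsCompact C) (hCD : C ⊆ D)
    (hU : UpperSemicontinuousOn U D) (hV : LowerSemicontinuousOn V D)
    (hmem : ∀ x ∈ C, ∀ t ∈ Icc (0 : ℝ) 1, x + t • z ∈ D) (hle : ∀ x ∈ C, U x - V x ≤ m)
    (hbd : ∀ x ∈ C \ interior C, ∀ t ∈ Icc (0 : ℝ) 1, U (x + t • z) - V x ≤ m) :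
    ∀ x ∈ C, U (x + z) - V x ≤ m := by
  intro x₁ hx₁
  by_contra! hgt
  obtain ⟨e, he, hgap⟩ : ∃ e, 0 < e ∧ m < U (x₁ + z) - V x₁ - e :=
    ⟨(U (x₁ + z) - V x₁ - m) / 2, by linarith, by linarith⟩
  have husc : UpperSemicontinuousOn (fun q : E × ℝ => U (q.1 + q.2 • z) + -V q.1 + -(e * q.2))
      (C ×ˢ Icc (0 : ℝ) 1) := by
    refine ((hU.comp (g := fun q : E × ℝ => q.1 + q.2 • z) (by fun_prop) ?_).add ?_).add
      (ContinuousOn.upperSemicontinuousOn (by fun_prop))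
    · exact fun q hq => hmem q.1 hq.1 q.2 hq.2
    · exact (LowerSemicontinuousOn.neg (hV.mono hCD)).comp (g := fun q : E × ℝ => q.1)
        (by fun_prop) fun q hq => hq.1
  obtain ⟨⟨x, t⟩, ⟨hxC, ht⟩, hmax⟩ := husc.exists_isMaxOn
    (⟨(x₁, 1), hx₁, right_mem_Icc.2 zero_le_one⟩ : (C ×ˢ Icc (0 : ℝ) 1).Nonempty)
    (hC.prod isCompact_Icc)
  simp only at hxC ht
  have hmax : ∀ y ∈ C, ∀ τ ∈ Icc (0 : ℝ) 1,
      U (y + τ • z) - V y - e * τ ≤ U (x + t • z) - V x - e * t := fun y hy τ hτ => by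
    simpa only [← sub_eq_add_neg, mem_ofPred_eq] using
      hmax (show (y, τ) ∈ C ×ˢ Icc (0 : ℝ) 1 from ⟨hy, hτ⟩)
  have hgt : m < U (x + t • z) - V x - e * t := by
    have := hmax x₁ hx₁ 1 (right_mem_Icc.2 zero_le_one)
    rw [one_smul, mul_one] at this
    linarith
  have het : 0 ≤ e * t := mul_nonneg he.le ht.1
  have hne : t • z ≠ 0 := fun h => by
    rw [h, add_zero] at hgt
    linarith [hle x hxC]
  have hxC' : x ∈ interior C := by
    by_contra hx
    linarith [hbd x ⟨hxC, hx⟩ t ht]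
  exact hUV.false_of_isMaxOn_slide (mem_interior_iff_mem_nhds.1 hxC') (hCD hxC)
    (hmem x hxC t ht) (smul_ne_zero_iff.1 hne).2 he
    (ht.1.lt_of_ne' (smul_ne_zero_iff.1 hne).1) ht.2 hmax

theorem OnlyCriticalContacts.isLocalMax_and_isLocalMin [LocallyCompactSpace E] {D K : Set E}
    {U V : E → ℝ} {m : ℝ} (hUV : OnlyCriticalContacts U V D) (hD : IsOpen D)
    (hU : UpperSemicontinuousOn U D) (hV : LowerSemicontinuousOn V D)
    (hK : IsCompact K) (hKD : K ⊆ D) (hKm : ∀ x ∈ K, U x - V x = m)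
    (hlt : ∀ x ∈ D \ K, U x - V x < m) :
    ∀ x ∈ K, IsLocalMax U x ∧ IsLocalMin V x := by
  obtain ⟨C, hC, hKC, hCD⟩ := exists_compact_between hK hD hKD
  have hle : ∀ x ∈ C, U x - V x ≤ m := fun x hx =>
    (em (x ∈ K)).elim (fun h => (hKm x h).le) fun h => (hlt x ⟨hCD hx, h⟩).le
  have hmem : ∀ᶠ z in 𝓝 (0 : E), ∀ x ∈ C, x + z ∈ D := by
    refine hC.eventually_forall_of_forall_eventually fun x hx => ?_
    refine (by fun_prop : Continuous fun q : E × E => q.2 + q.1).continuousAt.eventually ?_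
    simpa using hD.mem_nhds (hCD hx)
  have hbd := eventually_forall_add_sub_lt hD hU hV (hC.diff isOpen_interior)
    (sdiff_subset.trans hCD) fun x hx => hlt x ⟨hCD hx.1, fun h => hx.2 (hKC h)⟩
  have hslide : ∀ᶠ z in 𝓝 (0 : E), ∀ x ∈ C, U (x + z) - V x ≤ m := by
    obtain ⟨δ, hδ, hball⟩ := Metric.eventually_nhds_iff_ball.1 (hmem.and hbd)
    filter_upwards [ball_mem_nhds 0 hδ] with z hz
    have hsmall : ∀ t ∈ Icc (0 : ℝ) 1, t • z ∈ ball 0 δ := fun t ht => by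
      rw [mem_ball_zero_iff] at hz ⊢
      rw [norm_smul, Real.norm_of_nonneg ht.1]
      exact (mul_le_of_le_one_left (norm_nonneg _) ht.2).trans_lt hz
    exact hUV.add_sub_le hC hCD hU hV (fun x hx t ht => (hball _ (hsmall t ht)).1 x hx) hle
      fun x hx t ht => ((hball _ (hsmall t ht)).2 x hx).le
  intro x hx
  have hsub : Tendsto (fun y => y - x) (𝓝 x) (𝓝 0) := by
    simpa using (continuous_sub_right x).tendsto x
  have hsub' : Tendsto (fun y => x - y) (𝓝 x) (𝓝 0) := by
    simpa using (continuous_sub_left x).tendsto x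
  constructor
  · filter_upwards [hsub.eventually hslide] with y hy
    have := hy x (interior_subset (hKC hx))
    rw [add_sub_cancel] at this
    linarith [hKm x hx]
  · filter_upwards [hsub'.eventually hslide, mem_interior_iff_mem_nhds.1 (hKC hx)] with y hy hyC
    have := hy y hyC
    rw [add_sub_cancel] at this
    linarith [hKm x hx]

/-- At a maximum of `U - V` in `D` both functions would be locally extremal, and `hext` propagates
the maximum to a neighbourhood, so that the set of maximum points would be open as well as
compact. -/
theorem OnlyCriticalContacts.le [Nontrivial E] [FiniteDimensional ℝ E] {C D : Set E} {U V : E → ℝ}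
    (hUV : OnlyCriticalContacts U V D) (hC : IsCompact C) (hD : IsOpen D) (hDC : D ⊆ C)
    (hU : UpperSemicontinuousOn U C) (hV : LowerSemicontinuousOn V C)
    (hext : ∀ x ∈ D, IsLocalMax U x → IsLocalMin V x → IsLocalMin (fun y => U y - V y) x)
    (hbd : ∀ x ∈ C \ D, U x ≤ V x) : ∀ x ∈ C, U x ≤ V x := by
  intro x₁ hx₁
  by_contra! hlt
  have hW : UpperSemicontinuousOn (fun x => U x - V x) C := by
    simpa only [← sub_eq_add_neg, Pi.neg_apply] using hU.add hV.neg
  obtain ⟨x₀, hx₀, hmax⟩ := hW.exists_isMaxOn ⟨x₁, hx₁⟩ hC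
  have hmax : ∀ x ∈ C, U x - V x ≤ U x₀ - V x₀ := hmax
  set m := U x₀ - V x₀
  set K := C ∩ (fun x => U x - V x) ⁻¹' Ici m
  have hKc : IsCompact K := hW.isCompact_inter_preimage_Ici hC m
  have hKm : ∀ x ∈ K, U x - V x = m := fun x hx => le_antisymm (hmax x hx.1) hx.2
  have hKD : K ⊆ D := fun x hx => by
    by_contra hxD
    linarith [hbd x ⟨hx.1, hxD⟩, hKm x hx, hmax x₁ hx₁]
  have hlocal := hUV.isLocalMax_and_isLocalMin hD (hU.mono hDC) (hV.mono hDC) hKc hKD hKm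
    fun x hx => (hmax x (hDC hx.1)).lt_of_ne fun h => hx.2 ⟨hDC hx.1, h.ge⟩
  have hKo : IsOpen K := isOpen_iff_mem_nhds.2 fun x hx => by
    filter_upwards [hext x (hKD hx) (hlocal x hx).1 (hlocal x hx).2, hD.mem_nhds (hKD hx)]
      with y hy hyD
    exact ⟨hDC hyD, (hKm x hx).symm.le.trans hy⟩
  have huniv : K = univ := IsClopen.eq_univ ⟨hKc.isClosed, hKo⟩ ⟨x₀, hx₀, le_refl m⟩
  exact noncompact_univ E (huniv ▸ hKc)

end Contact

section NormalizedPLaplacian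

variable {E : Type*} [NormedAddCommGroup E] [InnerProductSpace ℝ E]

/-- The normalised `p`-Laplacian `tr L + (p - 2) ⟪L ν, ν⟫` of a Hessian `L` in the direction `ν`:
if `L` is the Hessian of `v` and `ν` the direction of `∇v ≠ 0`, then
`Δ_p v = |∇v|^(p-2) (tr L + (p - 2) ⟪L ν, ν⟫)`. -/
noncomputable def normalizedPLaplacian (p : ℝ) (L : E →L[ℝ] E) (ν : E) : ℝ :=
  LinearMap.trace ℝ E (L : E →ₗ[ℝ] E) + (p - 2) * inner ℝ (L ν) ν

lemma normalizedPLaplacian_add (p : ℝ) (L M : E →L[ℝ] E) (ν : E) :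
    normalizedPLaplacian p (L + M) ν
      = normalizedPLaplacian p L ν + normalizedPLaplacian p M ν := by
  simp only [normalizedPLaplacian, ContinuousLinearMap.toLinearMap_add, map_add, add_apply,
    inner_add_left]
  ring

lemma normalizedPLaplacian_smul (p c : ℝ) (L : E →L[ℝ] E) (ν : E) :
    normalizedPLaplacian p (c • L) ν = c * normalizedPLaplacian p L ν := by
  simp only [normalizedPLaplacian, ContinuousLinearMap.toLinearMap_smul, map_smul, smul_apply,
    real_inner_smul_left, smul_eq_mul]
  ring

lemma normalizedPLaplacian_sub (p : ℝ) (L M : E →L[ℝ] E) (ν : E) :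
    normalizedPLaplacian p (L - M) ν
      = normalizedPLaplacian p L ν - normalizedPLaplacian p M ν := by
  rw [sub_eq_add_neg, ← neg_one_smul ℝ M, normalizedPLaplacian_add, normalizedPLaplacian_smul]
  ring

lemma normalizedPLaplacian_neg_right (p : ℝ) (L : E →L[ℝ] E) (ν : E) :
    normalizedPLaplacian p L (-ν) = normalizedPLaplacian p L ν := by
  simp only [normalizedPLaplacian, map_neg, inner_neg_neg]

variable [FiniteDimensional ℝ E]

lemma continuous_trace_coe :
    Continuous fun L : E →L[ℝ] E => LinearMap.trace ℝ E (L : E →ₗ[ℝ] E) :=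
  (LinearMap.trace ℝ E ∘ₗ ContinuousLinearMap.coeLM ℝ).continuous_of_finiteDimensional

lemma continuous_normalizedPLaplacian (p : ℝ) :
    Continuous fun z : (E →L[ℝ] E) × E => normalizedPLaplacian p z.1 z.2 :=
  (continuous_trace_coe.comp continuous_fst).add
    (continuous_const.mul ((continuous_fst.clm_apply continuous_snd).inner continuous_snd))

lemma exists_abs_normalizedPLaplacian_le (p B : ℝ) :
    ∃ K, 0 ≤ K ∧ ∀ (L : E →L[ℝ] E) (ν : E), ‖L‖ ≤ B → ‖ν‖ = 1 →
      |normalizedPLaplacian p L ν| ≤ K := by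
  have hcompact : IsCompact (closedBall (0 : E →L[ℝ] E) B ×ˢ sphere (0 : E) 1) :=
    (isCompact_closedBall _ _).prod (isCompact_sphere _ _)
  obtain ⟨K, hK⟩ :=
    hcompact.exists_bound_of_continuousOn (continuous_normalizedPLaplacian p).continuousOn
  exact ⟨|K|, abs_nonneg K, fun L ν hL hν => (hK (L, ν) (by simp [hL, hν])).trans (le_abs_self K)⟩

lemma normalizedPLaplacian_id (p : ℝ) {ν : E} (hν : ‖ν‖ = 1) :
    normalizedPLaplacian p (ContinuousLinearMap.id ℝ E) ν = Module.finrank ℝ E + p - 2 := by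
  simp only [normalizedPLaplacian, ContinuousLinearMap.coe_id, LinearMap.trace_id,
    ContinuousLinearMap.id_apply, real_inner_self_eq_norm_sq, hν]
  ring

lemma normalizedPLaplacian_rankOne_self (p : ℝ) (z ν : E) :
    normalizedPLaplacian p (InnerProductSpace.rankOne ℝ z z) ν
      = ‖z‖ ^ 2 + (p - 2) * inner ℝ z ν ^ 2 := by
  rw [normalizedPLaplacian, InnerProductSpace.trace_rankOne, real_inner_self_eq_norm_sq,
    InnerProductSpace.rankOne_apply, real_inner_smul_left, sq (inner ℝ z ν)]

lemma exists_orthonormalBasis_apply_eq {ν : E} (hν : ‖ν‖ = 1) :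
    ∃ (u : Finset E) (b : OrthonormalBasis u ℝ E) (i : u), b i = ν := by
  have h : Orthonormal ℝ (Subtype.val : ({ν} : Set E) → E) := by
    constructor
    · rintro ⟨i, hi⟩
      simpa [mem_singleton_iff.1 hi] using hν
    · rintro ⟨i, hi⟩ ⟨j, hj⟩ hij
      exact absurd (Subtype.ext ((mem_singleton_iff.1 hi).trans (mem_singleton_iff.1 hj).symm)) hij
  obtain ⟨u, b, hu, hb⟩ := h.exists_orthonormalBasis_extension
  exact ⟨u, b, ⟨ν, hu rfl⟩, by rw [hb]⟩

-- In an orthonormal basis containing `ν` the expression is a combination of diagonal entries with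
-- coefficients `1` and `p - 1`.
lemma normalizedPLaplacian_nonpos {p : ℝ} (hp : 1 ≤ p) {L : E →L[ℝ] E}
    (hL : ∀ τ, inner ℝ (L τ) τ ≤ 0) {ν : E} (hν : ‖ν‖ = 1) : normalizedPLaplacian p L ν ≤ 0 := by
  classical
  obtain ⟨u, b, i, hi⟩ := exists_orthonormalBasis_apply_eq hν
  have htrace : LinearMap.trace ℝ E (L : E →ₗ[ℝ] E)
      = inner ℝ (L ν) ν + ∑ j ∈ Finset.univ.erase i, inner ℝ (L (b j)) (b j) := by
    rw [LinearMap.trace_eq_sum_inner _ b, ← Finset.add_sum_erase _ _ (Finset.mem_univ i), hi]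
    simp only [real_inner_comm, ContinuousLinearMap.coe_coe]
  have hrest : ∑ j ∈ Finset.univ.erase i, inner ℝ (L (b j)) (b j) ≤ 0 :=
    Finset.sum_nonpos fun j _ => hL _
  calc normalizedPLaplacian p L ν
      = (p - 1) * inner ℝ (L ν) ν + ∑ j ∈ Finset.univ.erase i, inner ℝ (L (b j)) (b j) := by
        rw [normalizedPLaplacian, htrace]
        ring
    _ ≤ 0 := add_nonpos (mul_nonpos_of_nonneg_of_nonpos (by linarith) (hL ν)) hrest

end NormalizedPLaplacian

section Hessian

variable {E : Type*} [NormedAddCommGroup E] [InnerProductSpace ℝ E] [CompleteSpace E]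

lemma hasGradientAt_add {f g : E → ℝ} {f' g' x : E} (hf : HasGradientAt f f' x)
    (hg : HasGradientAt g g' x) : HasGradientAt (fun y => f y + g y) (f' + g') x := by
  rw [hasGradientAt_iff_hasFDerivAt] at hf hg ⊢
  rw [map_add]
  exact hf.add hg

lemma hasGradientAt_const_mul {f : E → ℝ} {f' x : E} (c : ℝ) (hf : HasGradientAt f f' x) :
    HasGradientAt (fun y => c * f y) (c • f') x := by
  simpa only [hasGradientAt_iff_hasFDerivAt, map_smul] using
    (hasGradientAt_iff_hasFDerivAt.1 hf).const_mul c

lemma hasGradientAt_comp_add_left {f : E → ℝ} {f' a x : E} :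
    HasGradientAt (fun y => f (a + y)) f' x ↔ HasGradientAt f f' (a + x) := by
  simp only [hasGradientAt_iff_hasFDerivAt, hasFDerivAt_comp_add_left]

lemma gradient_eq_zero_of_isLocalExtr {f : E → ℝ} {x : E} (h : IsLocalExtr f x) :
    gradient f x = 0 := by
  rw [gradient, h.fderiv_eq_zero, map_zero]

/-- `f` is differentiable near `x`, and its gradient has derivative `L` at `x`. -/
def HasHessianAt (f : E → ℝ) (L : E →L[ℝ] E) (x : E) : Prop :=
  (∀ᶠ y in 𝓝 x, DifferentiableAt ℝ f y) ∧ HasFDerivAt (gradient f) L x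

namespace HasHessianAt

variable {f g : E → ℝ} {L M : E →L[ℝ] E} {x : E}

lemma of_hasGradientAt {X : E → E} (hf : ∀ᶠ y in 𝓝 x, HasGradientAt f (X y) y)
    (hX : HasFDerivAt X L x) : HasHessianAt f L x :=
  ⟨hf.mono fun _ h => h.differentiableAt,
    hX.congr_of_eventuallyEq (hf.mono fun _ h => h.gradient)⟩

lemma eventually_hasGradientAt (h : HasHessianAt f L x) :
    ∀ᶠ y in 𝓝 x, HasGradientAt f (gradient f y) y :=
  h.1.mono fun _ hy => hy.hasGradientAt

lemma hasGradientAt (h : HasHessianAt f L x) : HasGradientAt f (gradient f x) x :=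
  h.eventually_hasGradientAt.self_of_nhds

lemma add (hf : HasHessianAt f L x) (hg : HasHessianAt g M x) :
    HasHessianAt (fun y => f y + g y) (L + M) x :=
  of_hasGradientAt ((hf.eventually_hasGradientAt.and hg.eventually_hasGradientAt).mono
    fun _ h => hasGradientAt_add h.1 h.2) (hf.2.add hg.2)

lemma const_mul (c : ℝ) (hf : HasHessianAt f L x) : HasHessianAt (fun y => c * f y) (c • L) x :=
  of_hasGradientAt (hf.eventually_hasGradientAt.mono fun _ h => hasGradientAt_const_mul c h)
    (hf.2.const_smul c)

lemma sub (hf : HasHessianAt f L x) (hg : HasHessianAt g M x) :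
    HasHessianAt (fun y => f y - g y) (L - M) x := by
  simpa [sub_eq_add_neg] using hf.add (hg.const_mul (-1))

lemma comp_add_left {a : E} (h : HasHessianAt f L (a + x)) :
    HasHessianAt (fun y => f (a + y)) L x := by
  refine of_hasGradientAt (X := fun y => gradient f (a + y)) ?_
    ((hasFDerivAt_comp_add_left a).2 h.2)
  filter_upwards [(continuous_const_add a).continuousAt.eventually h.eventually_hasGradientAt]
    with y hy using hasGradientAt_comp_add_left.2 hy

lemma inner_nonpos_of_isLocalMax (h : HasHessianAt f L x) (hmax : IsLocalMax f x) (τ : E) :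
    inner ℝ (L τ) τ ≤ 0 := by
  set g : ℝ → ℝ := fun t => f (x + t • τ) with hg
  have hline : ∀ t : ℝ, HasDerivAt (fun t : ℝ => x + t • τ) τ t := fun t => by
    simpa using ((hasDerivAt_id t).smul_const τ).const_add x
  have hcont : Tendsto (fun t : ℝ => x + t • τ) (𝓝 0) (𝓝 x) := by
    simpa using (hline 0).continuousAt.tendsto
  have hg' : ∀ᶠ t in 𝓝 (0 : ℝ), HasDerivAt g (inner ℝ (gradient f (x + t • τ)) τ) t := by
    filter_upwards [hcont.eventually h.eventually_hasGradientAt] with t ht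
    simpa [hg, Function.comp_def] using
      (hasGradientAt_iff_hasFDerivAt.1 ht).comp_hasDerivAt t (hline t)
  have hdd : deriv (deriv g) 0 = inner ℝ (L τ) τ := by
    have hL : HasFDerivAt (gradient f) L (x + (0 : ℝ) • τ) := by simpa using h.2
    have hgrad : HasDerivAt (fun t : ℝ => gradient f (x + t • τ)) (L τ) 0 := by
      simpa only [Function.comp_def] using hL.comp_hasDerivAt (0 : ℝ) (hline 0)
    have hderiv : deriv g =ᶠ[𝓝 0] fun t => inner ℝ (gradient f (x + t • τ)) τ :=
      hg'.mono fun t ht => ht.deriv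
    rw [hderiv.deriv_eq, (hgrad.inner ℝ (hasDerivAt_const (0 : ℝ) τ)).deriv]
    simp
  have hgmax : IsLocalMax g 0 := by
    simpa [IsLocalMax, IsMaxFilter, hg] using hcont.eventually hmax
  by_contra! hpos
  have hmin : IsLocalMin g 0 := isLocalMin_of_deriv_deriv_pos (hdd ▸ hpos) hgmax.deriv_eq_zero
    hg'.self_of_nhds.continuousAt
  have hconst : g =ᶠ[𝓝 0] fun _ => g 0 := by
    filter_upwards [hgmax, hmin] with t h1 h2 using le_antisymm h1 h2
  have : deriv (deriv g) 0 = 0 := by simp [hconst.deriv.deriv_eq]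
  linarith

end HasHessianAt

end Hessian

section ContDiff

variable {E : Type*} [NormedAddCommGroup E] [InnerProductSpace ℝ E] [FiniteDimensional ℝ E]

lemma gradient_eq_sum (f : E → ℝ) :
    gradient f = fun x => ∑ i, fderiv ℝ f x (stdOrthonormalBasis ℝ E i) •
      stdOrthonormalBasis ℝ E i := by
  ext1 x
  rw [← (stdOrthonormalBasis ℝ E).sum_repr' (gradient f x)]
  refine Finset.sum_congr rfl fun i _ => ?_
  rw [real_inner_comm, gradient, InnerProductSpace.toDual_symm_apply]

lemma contDiffAt_gradient {f : E → ℝ} {x : E} {m n : WithTop ℕ∞} (h : ContDiffAt ℝ n f x)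
    (hmn : m + 1 ≤ n) : ContDiffAt ℝ m (gradient f) x := by
  rw [gradient_eq_sum]
  exact ContDiffAt.sum fun i _ =>
    ((h.fderiv_right hmn).clm_apply contDiffAt_const).smul contDiffAt_const

lemma eventually_hasHessianAt {f : E → ℝ} {x : E} (h : ContDiffAt ℝ 2 f x) :
    ∀ᶠ y in 𝓝 x, HasHessianAt f (fderiv ℝ (gradient f) y) y := by
  filter_upwards [h.eventually (by simp)] with y hy
  refine ⟨?_, ((contDiffAt_gradient (m := 1) hy (by norm_num)).differentiableAt
    one_ne_zero).hasFDerivAt⟩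
  filter_upwards [hy.eventually (by simp)] with z hz using hz.differentiableAt two_ne_zero

lemma continuousAt_fderiv_gradient {f : E → ℝ} {x : E} (h : ContDiffAt ℝ 2 f x) :
    ContinuousAt (fderiv ℝ (gradient f)) x :=
  ((contDiffAt_gradient (m := 1) h (by norm_num)).fderiv_right (m := 0) (by simp)).continuousAt

end ContDiff

section Contact

variable {E : Type*} [NormedAddCommGroup E] [InnerProductSpace ℝ E] [CompleteSpace E]

namespace IsContact

variable {U V : E → ℝ} {L M : E →L[ℝ] E} {a b : E}

lemma gradient_eq (h : IsContact U V a b) (hU : DifferentiableAt ℝ U a)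
    (hV : DifferentiableAt ℝ V b) : gradient U a = gradient V b := by
  have hU' : HasFDerivAt (fun ζ => U (a + ζ)) (fderiv ℝ U a) 0 := by
    simpa [hasFDerivAt_comp_add_left] using hU.hasFDerivAt
  have hV' : HasFDerivAt (fun ζ => V (b + ζ)) (fderiv ℝ V b) 0 := by
    simpa [hasFDerivAt_comp_add_left] using hV.hasFDerivAt
  rw [gradient, gradient, sub_eq_zero.1 (h.hasFDerivAt_eq_zero (hU'.sub hV'))]

lemma inner_sub_nonpos (h : IsContact U V a b) (hU : HasHessianAt U L a)
    (hV : HasHessianAt V M b) (τ : E) : inner ℝ ((L - M) τ) τ ≤ 0 :=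
  (HasHessianAt.sub (HasHessianAt.comp_add_left (by simpa using hU))
    (HasHessianAt.comp_add_left (by simpa using hV))).inner_nonpos_of_isLocalMax h τ

lemma normalizedPLaplacian_le {E : Type*} [NormedAddCommGroup E] [InnerProductSpace ℝ E]
    [FiniteDimensional ℝ E] {U V : E → ℝ} {L M : E →L[ℝ] E} {a b ν : E} {p : ℝ} (hp : 1 ≤ p)
    (h : IsContact U V a b) (hU : HasHessianAt U L a) (hV : HasHessianAt V M b) (hν : ‖ν‖ = 1) :
    normalizedPLaplacian p L ν ≤ normalizedPLaplacian p M ν := by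
  rw [← sub_nonpos, ← normalizedPLaplacian_sub]
  exact normalizedPLaplacian_nonpos hp (h.inner_sub_nonpos hU hV) hν

end IsContact

end Contact

section Comparison

variable {E : Type*} [NormedAddCommGroup E] [InnerProductSpace ℝ E]

/-- `v` solves the normalised equation `Δ_p v = σ |∇v|^(s + p - 2)`, divided by `|∇v|^(p - 2)`, at
the noncritical points of `D`. For equation (E) one has `s = q - p + 2` and `σ = 1`, and the
multiples of a solution of (E) correspond to other positive values of `σ`. -/
structure IsNormalizedSolution [CompleteSpace E] (p s σ : ℝ) (D : Set E) (v : E → ℝ) : Prop where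
  differentiableAt : ∀ x ∈ D, DifferentiableAt ℝ v x
  contDiffAt : ∀ x ∈ D, gradient v x ≠ 0 → ContDiffAt ℝ 2 v x
  eq : ∀ x ∈ D, gradient v x ≠ 0 →
    normalizedPLaplacian p (fderiv ℝ (gradient v) x) (normalize (gradient v x))
      = σ * ‖gradient v x‖ ^ s

/-- `H` is, near `x`, a classical strict subsolution of the normalised equation. If `∇H` vanishes
at `x`, the inequality is required in all directions. -/
def IsStrictSubAt [CompleteSpace E] (p s σ : ℝ) (H : E → ℝ) (x : E) : Prop :=
  ∃ L, HasHessianAt H L x ∧ ∀ ν : E, ‖ν‖ = 1 → gradient H x = ‖gradient H x‖ • ν →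
    σ * ‖gradient H x‖ ^ s < normalizedPLaplacian p L ν

lemma IsNormalizedSolution.mono [CompleteSpace E] {p s σ : ℝ} {D D' : Set E} {v : E → ℝ}
    (h : IsNormalizedSolution p s σ D v) (hD : D' ⊆ D) : IsNormalizedSolution p s σ D' v :=
  ⟨fun x hx => h.1 x (hD hx), fun x hx => h.2 x (hD hx), fun x hx => h.3 x (hD hx)⟩

lemma IsNormalizedSolution.continuousOn [CompleteSpace E] {p s σ : ℝ} {D : Set E} {v : E → ℝ}
    (h : IsNormalizedSolution p s σ D v) : ContinuousOn v D :=
  fun x hx => (h.differentiableAt x hx).continuousAt.continuousWithinAt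

variable [FiniteDimensional ℝ E] {p s σ : ℝ} {H v : E → ℝ}

lemma IsNormalizedSolution.const_mul {D : Set E} {c : ℝ} (hc : c ≠ 0)
    (hv : IsNormalizedSolution p s σ D v) :
    IsNormalizedSolution p s (c * |c| ^ (-s) * σ) D fun x => c * v x := by
  have hgrad : ∀ x ∈ D, gradient (fun y => c * v y) x = c • gradient v x := fun x hx =>
    (hasGradientAt_const_mul c (hv.differentiableAt x hx).hasGradientAt).gradient
  have hne : ∀ x ∈ D, gradient (fun y => c * v y) x ≠ 0 → gradient v x ≠ 0 := fun x hx h =>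
    (smul_ne_zero_iff.1 (hgrad x hx ▸ h)).2
  refine ⟨fun x hx => (hv.differentiableAt x hx).const_mul c,
    fun x hx h => contDiffAt_const.mul (hv.contDiffAt x hx (hne x hx h)), fun x hx h => ?_⟩
  have hHess := (eventually_hasHessianAt (hv.contDiffAt x hx (hne x hx h))).self_of_nhds
  have hdir : ∀ L : E →L[ℝ] E, normalizedPLaplacian p L (normalize (c • gradient v x))
      = normalizedPLaplacian p L (normalize (gradient v x)) := fun L => by
    rcases lt_or_gt_of_ne hc with hc | hc
    · rw [NormedSpace.normalize_smul_of_neg hc, normalizedPLaplacian_neg_right]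
    · rw [NormedSpace.normalize_smul_of_pos hc]
  rw [(hHess.const_mul c).2.fderiv, normalizedPLaplacian_smul, hgrad x hx, hdir,
    hv.eq x hx (hne x hx h), norm_smul, Real.norm_eq_abs,
    Real.mul_rpow (abs_nonneg c) (norm_nonneg _), Real.rpow_neg (abs_nonneg c)]
  have : |c| ^ s ≠ 0 := (Real.rpow_pos_of_pos (abs_pos.2 hc) s).ne'
  field_simp

lemma IsNormalizedSolution.neg {D : Set E} (hv : IsNormalizedSolution p s σ D v) :
    IsNormalizedSolution p s (-σ) D fun x => -v x := by
  simpa using hv.const_mul (c := -1) (by norm_num)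

lemma IsStrictSubAt.gradient_eq_zero_of_isContact {a b : E} {D : Set E} (hp : 1 ≤ p)
    (h : IsStrictSubAt p s σ H a) (hv : IsNormalizedSolution p s σ D v) (hb : b ∈ D)
    (hc : IsContact H v a b) : gradient H a = 0 := by
  obtain ⟨L, hL, hlt⟩ := h
  have heq := hc.gradient_eq hL.hasGradientAt.differentiableAt (hv.differentiableAt b hb)
  by_contra hne
  have hM := (eventually_hasHessianAt (hv.contDiffAt b hb (heq ▸ hne))).self_of_nhds
  have hMeq := hv.eq b hb (heq ▸ hne)
  have hν := norm_normalize_eq_one_iff.2 hne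
  have hle := hc.normalizedPLaplacian_le hp hL hM hν
  have := hlt _ hν (norm_smul_normalize _).symm
  rw [heq] at hle this
  linarith

lemma IsStrictSubAt.continuousAt {a : E} (h : IsStrictSubAt p s σ H a) : ContinuousAt H a := by
  obtain ⟨L, hL, -⟩ := h
  exact hL.hasGradientAt.differentiableAt.continuousAt

lemma IsStrictSubAt.not_isLocalMax [Nontrivial E] {a : E} (hp : 1 ≤ p) (hs : s ≠ 0)
    (h : IsStrictSubAt p s σ H a) : ¬ IsLocalMax H a := by
  intro hmax
  obtain ⟨L, hL, hlt⟩ := h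
  have hgrad := gradient_eq_zero_of_isLocalExtr (Or.inr hmax)
  obtain ⟨ν, hν⟩ := exists_norm_eq E zero_le_one
  have hpos := hlt ν hν (by simp [hgrad])
  rw [hgrad, norm_zero, Real.zero_rpow hs, mul_zero] at hpos
  exact hpos.not_ge (normalizedPLaplacian_nonpos hp (hL.inner_nonpos_of_isLocalMax hmax) hν)

theorem IsNormalizedSolution.le_of_isStrictSubAt [Nontrivial E] {C D : Set E} (hp : 1 ≤ p)
    (hs : s ≠ 0) (hv : IsNormalizedSolution p s σ D v) (hC : IsCompact C) (hD : IsOpen D)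
    (hDC : D ⊆ C) (hvc : ContinuousOn v C) (hHc : ContinuousOn H C)
    (hH : ∀ x ∈ D, IsStrictSubAt p s σ H x) (hbd : ∀ x ∈ C \ D, H x ≤ v x) :
    ∀ x ∈ C, H x ≤ v x := by
  have hcrit : OnlyCriticalContacts H v D := fun a ha b hb _ hc => Or.inl <| by
    obtain ⟨L, hL, -⟩ := hH a ha
    simpa [hasGradientAt_iff_hasFDerivAt,
      (hH a ha).gradient_eq_zero_of_isContact hp hv hb hc] using hL.hasGradientAt
  exact hcrit.le hC hD hDC hHc.upperSemicontinuousOn hvc.lowerSemicontinuousOn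
    (fun x hx hmax _ => absurd hmax ((hH x hx).not_isLocalMax hp hs)) hbd

lemma IsNormalizedSolution.le_of_le_spheres [Nontrivial E] {y : E} {r R : ℝ} (hp : 1 ≤ p)
    (hs : s ≠ 0) (hv : IsNormalizedSolution p s σ (closedBall y R \ ball y r) v)
    (hH : ∀ x, r ≤ ‖x - y‖ → ‖x - y‖ ≤ R → IsStrictSubAt p s σ H x)
    (hr : ∀ x, ‖x - y‖ = r → H x ≤ v x) (hR : ∀ x, ‖x - y‖ = R → H x ≤ v x) :
    ∀ x, r ≤ ‖x - y‖ → ‖x - y‖ ≤ R → H x ≤ v x := by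
  have hC : ∀ x, x ∈ closedBall y R \ ball y r ↔ r ≤ ‖x - y‖ ∧ ‖x - y‖ ≤ R := fun x => by
    simp [dist_eq_norm, and_comm]
  have hA : ball y R \ closedBall y r ⊆ closedBall y R \ ball y r :=
    sdiff_subset_sdiff ball_subset_closedBall ball_subset_closedBall
  intro x hxr hxR
  refine (hv.mono hA).le_of_isStrictSubAt hp hs ((isCompact_closedBall y R).diff isOpen_ball)
    (isOpen_ball.sdiff isClosed_closedBall) hA hv.continuousOn
    (fun z hz => (hH z ((hC z).1 hz).1 ((hC z).1 hz).2).continuousAt.continuousWithinAt)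
    (fun z hz => hH z ((hC z).1 (hA hz)).1 ((hC z).1 (hA hz)).2) (fun z hz => ?_)
    x ((hC x).2 ⟨hxr, hxR⟩)
  obtain ⟨hzr, hzR⟩ := (hC z).1 hz.1
  rcases hzr.eq_or_lt with h | h
  · exact hr z h.symm
  · refine hR z (hzR.antisymm ?_)
    by_contra! h'
    exact hz.2 ⟨mem_ball_iff_norm.2 h', by simpa [dist_eq_norm] using h⟩

end Comparison

section Radial

variable {E : Type*} [NormedAddCommGroup E] [InnerProductSpace ℝ E]

/-- The Hessian at `z` of the radial function with gradient field `z ↦ ψ(|z|²) z`, where the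
arguments are the values of `ψ` and `ψ'` at `|z|²`. -/
noncomputable def radialHessian (ψ ψ' : ℝ) (z : E) : E →L[ℝ] E :=
  ψ • ContinuousLinearMap.id ℝ E + (2 * ψ') • InnerProductSpace.rankOne ℝ z z

lemma hasFDerivAt_norm_sub_sq (x y : E) :
    HasFDerivAt (fun w : E => ‖w - y‖ ^ 2) ((2 : ℝ) • innerSL ℝ (x - y)) x := by
  refine ((hasFDerivAt_id x).sub_const y).norm_sq.congr_fderiv ?_
  ext w
  simp

lemma hasFDerivAt_smul_norm_sub_sq {ψ : ℝ → ℝ} {ψ' : ℝ} {x y : E}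
    (h : HasDerivAt ψ ψ' (‖x - y‖ ^ 2)) :
    HasFDerivAt (fun w : E => ψ (‖w - y‖ ^ 2) • (w - y))
      (radialHessian (ψ (‖x - y‖ ^ 2)) ψ' (x - y)) x := by
  refine ((h.comp_hasFDerivAt x (hasFDerivAt_norm_sub_sq x y)).smul
    ((hasFDerivAt_id x).sub_const y)).congr_fderiv ?_
  ext w
  simp only [radialHessian, Function.comp_apply, id_eq, add_apply, smul_apply,
    ContinuousLinearMap.smulRight_apply, ContinuousLinearMap.id_apply, innerSL_apply_apply,
    InnerProductSpace.rankOne_apply, smul_eq_mul, smul_smul]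
  congr 2
  ring

lemma inner_sq_eq_norm_sq_of_smul_eq {c : ℝ} {z ν : E} (hc : c ≠ 0) (hν : ‖ν‖ = 1)
    (h : c • z = ‖c • z‖ • ν) : inner ℝ z ν ^ 2 = ‖z‖ ^ 2 := by
  have hinner : c * inner ℝ z ν = |c| * ‖z‖ := by
    simpa [real_inner_smul_left, hν, norm_smul] using congrArg (fun w => inner ℝ w ν) h
  apply mul_left_cancel₀ (pow_ne_zero 2 hc)
  rw [← mul_pow, hinner, mul_pow, sq_abs]

variable [FiniteDimensional ℝ E]

lemma hasGradientAt_radial {Φ : ℝ → ℝ} {ψ : ℝ} {x y : E}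
    (h : HasDerivAt Φ (ψ / 2) (‖x - y‖ ^ 2)) :
    HasGradientAt (fun w : E => Φ (‖w - y‖ ^ 2)) (ψ • (x - y)) x := by
  rw [hasGradientAt_iff_hasFDerivAt]
  refine (h.comp_hasFDerivAt x (hasFDerivAt_norm_sub_sq x y)).congr_fderiv ?_
  ext w
  simp only [smul_apply, innerSL_apply_apply, smul_eq_mul, map_smul,
    InnerProductSpace.toDual_apply_apply]
  ring

lemma hasHessianAt_radial {Φ ψ : ℝ → ℝ} {ψ' : ℝ} {x y : E}
    (hΦ : ∀ᶠ t in 𝓝 (‖x - y‖ ^ 2), HasDerivAt Φ (ψ t / 2) t)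
    (hψ : HasDerivAt ψ ψ' (‖x - y‖ ^ 2)) :
    HasHessianAt (fun w => Φ (‖w - y‖ ^ 2)) (radialHessian (ψ (‖x - y‖ ^ 2)) ψ' (x - y)) x :=
  .of_hasGradientAt (((hasFDerivAt_norm_sub_sq x y).continuousAt.eventually hΦ).mono
    fun _ h => hasGradientAt_radial h) (hasFDerivAt_smul_norm_sub_sq hψ)

lemma normalizedPLaplacian_radialHessian (p ψ ψ' : ℝ) (z : E) {ν : E} (hν : ‖ν‖ = 1) :
    normalizedPLaplacian p (radialHessian ψ ψ' z) ν = (Module.finrank ℝ E + p - 2) * ψ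
      + 2 * ψ' * (‖z‖ ^ 2 + (p - 2) * inner ℝ z ν ^ 2) := by
  rw [radialHessian, normalizedPLaplacian_add, normalizedPLaplacian_smul,
    normalizedPLaplacian_smul, normalizedPLaplacian_id p hν, normalizedPLaplacian_rankOne_self]
  ring

lemma isStrictSubAt_radial {p s σ : ℝ} {Φ ψ : ℝ → ℝ} {ψ' : ℝ} {x y : E}
    (hψ0 : ψ (‖x - y‖ ^ 2) ≠ 0)
    (hΦ : ∀ᶠ t in 𝓝 (‖x - y‖ ^ 2), HasDerivAt Φ (ψ t / 2) t)
    (hψ : HasDerivAt ψ ψ' (‖x - y‖ ^ 2))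
    (hlt : σ * (|ψ (‖x - y‖ ^ 2)| * ‖x - y‖) ^ s <
      (Module.finrank ℝ E + p - 2) * ψ (‖x - y‖ ^ 2) + 2 * (p - 1) * ψ' * ‖x - y‖ ^ 2) :
    IsStrictSubAt p s σ (fun w => Φ (‖w - y‖ ^ 2)) x := by
  refine ⟨_, hasHessianAt_radial hΦ hψ, fun ν hν hdir => ?_⟩
  rw [(hasGradientAt_radial hΦ.self_of_nhds).gradient] at hdir ⊢
  rw [normalizedPLaplacian_radialHessian _ _ _ _ hν, inner_sq_eq_norm_sq_of_smul_eq hψ0 hν hdir,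
    norm_smul, Real.norm_eq_abs]
  linarith

end Radial

section AnnulusBarrier

/-- The barrier of Hopf's boundary point lemma on an annulus of outer radius `R`, as a function of
the squared distance to the centre. -/
noncomputable def annulusBarrier (α ε R t : ℝ) : ℝ := ε * (t ^ (-α) - (R ^ 2) ^ (-α))

lemma hasDerivAt_annulusBarrier (α ε R : ℝ) {t : ℝ} (ht : 0 < t) :
    HasDerivAt (annulusBarrier α ε R) (-(2 * α * ε) * t ^ (-(α + 1)) / 2) t := by
  refine (((Real.hasDerivAt_rpow_const (p := -α) (Or.inl ht.ne')).sub_const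
    ((R ^ 2) ^ (-α))).const_mul ε).congr_deriv ?_
  rw [show -α - 1 = -(α + 1) by ring]
  ring

lemma hasDerivAt_annulusBarrier_slope (α ε : ℝ) {t : ℝ} (ht : 0 < t) :
    HasDerivAt (fun t => -(2 * α * ε) * t ^ (-(α + 1)))
      (2 * α * ε * (α + 1) * (t ^ (-(α + 1)) / t)) t := by
  refine ((Real.hasDerivAt_rpow_const (p := -(α + 1)) (Or.inl ht.ne')).const_mul
    (-(2 * α * ε))).congr_deriv ?_
  rw [Real.rpow_sub_one ht.ne']
  ring

lemma rpow_neg_le_rpow_neg {a b c : ℝ} (ha : 0 < a) (hab : a ≤ b) (hc : 0 ≤ c) :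
    b ^ (-c) ≤ a ^ (-c) :=
  Real.rpow_le_rpow_of_nonpos ha hab (neg_nonpos.2 hc)

lemma annulusBarrier_nonpos {α ε R t : ℝ} (hα : 0 ≤ α) (hε : 0 ≤ ε) (hR : 0 < R)
    (ht : R ^ 2 ≤ t) : annulusBarrier α ε R t ≤ 0 :=
  mul_nonpos_of_nonneg_of_nonpos hε
    (sub_nonpos.2 (rpow_neg_le_rpow_neg (by positivity) ht hα))

lemma annulusBarrier_le {α ε R r t : ℝ} (hα : 0 ≤ α) (hε : 0 ≤ ε) (hr : 0 < r)
    (ht : r ^ 2 ≤ t) : annulusBarrier α ε R t ≤ (r ^ 2) ^ (-α) * ε := by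
  have hle : t ^ (-α) ≤ (r ^ 2) ^ (-α) := rpow_neg_le_rpow_neg (by positivity) ht hα
  have hR : 0 ≤ (R ^ 2) ^ (-α) := by positivity
  calc annulusBarrier α ε R t ≤ ε * (r ^ 2) ^ (-α) := by
        unfold annulusBarrier
        gcongr
        linarith
    _ = (r ^ 2) ^ (-α) * ε := mul_comm _ _

lemma eventually_mul_rpow_lt {a b c : ℝ} (ha : 0 < a) (hc : 0 < c) :
    ∀ᶠ x : ℝ in 𝓝[>] 0, b * x ^ a < c := by
  have : Tendsto (fun x : ℝ => b * x ^ a) (𝓝[>] 0) (𝓝 (b * 0 ^ a)) :=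
    ((Real.continuousAt_rpow_const 0 a (Or.inr ha.le)).tendsto.const_mul b).mono_left
      nhdsWithin_le_nhds
  rw [Real.zero_rpow ha.ne', mul_zero] at this
  exact this.eventually_lt_const hc

-- Since `s > 1`, the nonlinear term `A ^ s` is negligible against the linear one for small `ε`.
lemma eventually_annulusBarrier_strict {n p s σ α r₁ r₂ : ℝ} (hs : 1 < s) (hα : 0 < α)
    (hαp : n + p - 1 ≤ 2 * (p - 1) * (α + 1)) (hr₁ : 0 < r₁) :
    ∀ᶠ ε : ℝ in 𝓝[>] 0, ∀ r, r₁ ≤ r → r ≤ r₂ →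
      σ * (|-(2 * α * ε) * (r ^ 2) ^ (-(α + 1))| * r) ^ s <
        (n + p - 2) * (-(2 * α * ε) * (r ^ 2) ^ (-(α + 1)))
          + 2 * (p - 1) * (2 * α * ε * (α + 1) * ((r ^ 2) ^ (-(α + 1)) / r ^ 2)) * r ^ 2 := by
  set Q : ℝ := 2 * α * (r₁ ^ 2) ^ (-(α + 1))
  have hQ0 : 0 < Q := by positivity
  filter_upwards [self_mem_nhdsWithin, eventually_mul_rpow_lt
    (b := |σ| * (Q ^ (s - 1) * r₂ ^ s)) (sub_pos.2 hs) one_pos] with ε hε hsmall r hr1 hr2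
  have hε : 0 < ε := hε
  have hr : 0 < r := hr₁.trans_le hr1
  set A : ℝ := 2 * α * ε * (r ^ 2) ^ (-(α + 1)) with hA
  have hA0 : 0 < A := by positivity
  have hAQ : A ≤ Q * ε := calc
    A ≤ 2 * α * ε * (r₁ ^ 2) ^ (-(α + 1)) := mul_le_mul_of_nonneg_left
        (rpow_neg_le_rpow_neg (by positivity) (by gcongr) (by linarith)) (by positivity)
    _ = Q * ε := by ring
  have hnonlinear : σ * (A ^ (s - 1) * r ^ s) < 1 := calc
    σ * (A ^ (s - 1) * r ^ s) ≤ |σ| * ((Q * ε) ^ (s - 1) * r₂ ^ s) := by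
        gcongr
        exact le_abs_self σ
    _ = |σ| * (Q ^ (s - 1) * r₂ ^ s) * ε ^ (s - 1) := by
        rw [Real.mul_rpow hQ0.le hε.le]
        ring
    _ < 1 := hsmall
  have habs : |-(2 * α * ε) * (r ^ 2) ^ (-(α + 1))| = A := by
    rw [neg_mul, abs_neg, abs_of_pos hA0]
  calc σ * (|-(2 * α * ε) * (r ^ 2) ^ (-(α + 1))| * r) ^ s
      = A * (σ * (A ^ (s - 1) * r ^ s)) := by
        rw [habs, Real.mul_rpow hA0.le hr.le, Real.rpow_sub_one hA0.ne']
        field_simp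
    _ < A * 1 := by gcongr
    _ ≤ A * (2 * (p - 1) * (α + 1) - (n + p - 2)) := by
        gcongr
        linarith
    _ = _ := by
        rw [hA]
        field_simp
        ring

variable {E : Type*} [NormedAddCommGroup E] [InnerProductSpace ℝ E] [FiniteDimensional ℝ E]

lemma exists_isStrictSubAt_annulus {p s σ : ℝ} (hp : 1 < p) (hs : 1 < s) {r R m μ : ℝ}
    (hr : 0 < r) (hR : 0 < R) (hμ : m < μ) (y : E) (r₂ : ℝ) :
    ∃ H : E → ℝ, (∀ x, r ≤ ‖x - y‖ → H x ≤ μ) ∧ (∀ x, R ≤ ‖x - y‖ → H x ≤ m) ∧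
      (∀ x, ‖x - y‖ = R → H x = m) ∧
      ∀ x, r ≤ ‖x - y‖ → ‖x - y‖ ≤ r₂ → IsStrictSubAt p s σ H x ∧ gradient H x ≠ 0 := by
  set n : ℝ := (Module.finrank ℝ E : ℝ)
  set α : ℝ := (n + p) / (2 * (p - 1)) with hα
  have hp1 : 0 < p - 1 := by linarith
  have hn : 0 ≤ n := Nat.cast_nonneg _
  have hα0 : 0 < α := by positivity
  have hαp : n + p - 1 ≤ 2 * (p - 1) * (α + 1) := by
    have : 2 * (p - 1) * α = n + p := by rw [hα]; field_simp
    linarith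
  obtain ⟨ε, ⟨hε, hstrict⟩, hsmall⟩ := (((eventually_mem_nhdsWithin (a := (0 : ℝ)) (s := Ioi 0)).and
    (eventually_annulusBarrier_strict (σ := σ) (r₂ := r₂) hs hα0 hαp hr)).and
    (eventually_mul_rpow_lt (b := (r ^ 2) ^ (-α)) one_pos (sub_pos.2 hμ))).exists
  have hε : 0 < ε := hε
  rw [Real.rpow_one] at hsmall
  have hderiv : ∀ t, 0 < t → HasDerivAt (fun t => m + annulusBarrier α ε R t)
      (-(2 * α * ε) * t ^ (-(α + 1)) / 2) t := fun t ht =>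
    (hasDerivAt_annulusBarrier α ε R ht).const_add m
  refine ⟨fun w => m + annulusBarrier α ε R (‖w - y‖ ^ 2), fun x hx => ?_, fun x hx => ?_,
    fun x hx => ?_, fun x hx hx₂ => ?_⟩
  · linarith [annulusBarrier_le (R := R) hα0.le hε.le hr (by gcongr : r ^ 2 ≤ ‖x - y‖ ^ 2)]
  · linarith [annulusBarrier_nonpos hα0.le hε.le hR (by gcongr : R ^ 2 ≤ ‖x - y‖ ^ 2)]
  · simp [hx, annulusBarrier]
  · have hx0 : 0 < ‖x - y‖ := hr.trans_le hx
    have hslope : -(2 * α * ε) * (‖x - y‖ ^ 2) ^ (-(α + 1)) ≠ 0 :=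
      mul_ne_zero (neg_ne_zero.2 (by positivity)) (by positivity)
    refine ⟨isStrictSubAt_radial hslope
      ((eventually_gt_nhds (pow_pos hx0 2)).mono hderiv)
      (hasDerivAt_annulusBarrier_slope α ε (by positivity)) (hstrict _ hx hx₂), ?_⟩
    rw [(hasGradientAt_radial (hderiv _ (by positivity))).gradient]
    exact smul_ne_zero hslope (norm_pos_iff.1 hx0)

end AnnulusBarrier

section StrongMinimum

lemma exists_touching_ball {X : Type*} [MetricSpace X] [ProperSpace X] {v : X → ℝ} {x₀ : X}
    {δ : ℝ} (hδ : 0 < δ) (hv : ContinuousOn v (ball x₀ δ)) (hmin : ∀ z ∈ ball x₀ δ, v x₀ ≤ v z)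
    (hne : ¬ ∀ᶠ y in 𝓝 x₀, v y = v x₀) :
    ∃ y x₁, 0 < dist x₁ y ∧ v x₁ = v x₀ ∧ closedBall y (3 * dist x₁ y / 2) ⊆ ball x₀ δ ∧
      ∀ z ∈ ball y (dist x₁ y), v x₀ < v z := by
  obtain ⟨y, hy, hvy⟩ : ∃ y ∈ ball x₀ (δ / 4), v y ≠ v x₀ := by
    by_contra! h
    exact hne (mem_of_superset (ball_mem_nhds x₀ (by positivity)) h)
  rw [mem_ball] at hy
  have hlevel : IsCompact (closedBall x₀ (δ / 2) ∩ v ⁻¹' {v x₀}) :=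
    (isCompact_closedBall x₀ (δ / 2)).of_isClosed_subset
      ((hv.mono (closedBall_subset_ball (by linarith))).preimage_isClosed_of_isClosed
        isClosed_closedBall isClosed_singleton) inter_subset_left
  obtain ⟨x₁, ⟨-, hx₁⟩, hclosest⟩ := hlevel.exists_isMinOn
    ⟨x₀, mem_closedBall_self (by positivity), rfl⟩
    (by fun_prop : Continuous fun z => dist z y).continuousOn
  have hx₁ : v x₁ = v x₀ := hx₁
  have hle : dist x₁ y ≤ dist x₀ y := hclosest ⟨mem_closedBall_self (by positivity), rfl⟩
  rw [dist_comm x₀ y] at hle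
  refine ⟨y, x₁, dist_pos.2 fun h => hvy (h ▸ hx₁), hx₁, fun z hz => ?_, fun z hz => ?_⟩
  · rw [mem_closedBall] at hz
    rw [mem_ball]
    linarith [dist_triangle z y x₀]
  · rw [mem_ball] at hz
    have hzx : dist z x₀ < δ / 2 := by linarith [dist_triangle z y x₀]
    refine (hmin z (mem_ball.2 (by linarith))).lt_of_ne fun h => hz.not_ge ?_
    exact hclosest ⟨hzx.le, h.symm⟩

variable {E : Type*} [NormedAddCommGroup E] [InnerProductSpace ℝ E] [FiniteDimensional ℝ E]
  [Nontrivial E] {p s σ : ℝ} {D : Set E} {v : E → ℝ}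

/-- Hopf's argument: a minimum of `v` on the boundary of an interior ball, inside which `v` is
larger, would be touched from below by an annulus barrier, whose gradient does not vanish. -/
lemma IsNormalizedSolution.false_of_touching_ball (hp : 1 < p) (hs : 1 < s)
    (hv : IsNormalizedSolution p s σ D v) {x₁ y : E} {R : ℝ} (hR : 0 < R) (hx₁ : ‖x₁ - y‖ = R)
    (hD : closedBall y (3 * R / 2) ⊆ D) (hmin : ∀ z ∈ closedBall y (3 * R / 2), v x₁ ≤ v z)
    (hlt : ∀ z ∈ ball y R, v x₁ < v z) : False := by
  obtain ⟨μ, hμ, hμv⟩ : ∃ μ, v x₁ < μ ∧ ∀ z ∈ sphere y (R / 2), μ ≤ v z := by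
    obtain ⟨z, hz, hzmin⟩ := (isCompact_sphere y (R / 2)).exists_isMinOn
      (NormedSpace.sphere_nonempty.2 (by positivity)) (hv.continuousOn.mono
      (sphere_subset_closedBall.trans ((closedBall_subset_closedBall (by linarith)).trans hD)))
    exact ⟨v z, hlt z (sphere_subset_ball (by linarith) hz), fun w hw => hzmin hw⟩
  obtain ⟨H, hHr, hHle, hHeq, hH⟩ := exists_isStrictSubAt_annulus (σ := σ) hp hs (r := R / 2)
    (by positivity) hR hμ y (3 * R / 2)
  have hA : closedBall y (3 * R / 2) \ ball y (R / 2) ⊆ closedBall y (3 * R / 2) := sdiff_subset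
  have hle : ∀ z, R / 2 ≤ ‖z - y‖ → ‖z - y‖ ≤ 3 * R / 2 → H z ≤ v z :=
    (hv.mono (hA.trans hD)).le_of_le_spheres hp.le (by linarith) (fun z h₁ h₂ => (hH z h₁ h₂).1)
      (fun z hz => (hHr z hz.ge).trans (hμv z (mem_sphere_iff_norm.2 hz)))
      fun z hz => (hHle z (by linarith)).trans (hmin z (mem_closedBall_iff_norm.2 hz.le))
  have hcontact : IsContact H v x₁ x₁ := by
    have hnear : ∀ᶠ ζ in 𝓝 (0 : E), R / 2 ≤ ‖x₁ + ζ - y‖ ∧ ‖x₁ + ζ - y‖ ≤ 3 * R / 2 := by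
      have hcont : ContinuousAt (fun ζ : E => ‖x₁ + ζ - y‖) 0 := by fun_prop
      exact (hcont.eventually (Icc_mem_nhds (by simp only [add_zero]; linarith)
        (by simp only [add_zero]; linarith)))
    filter_upwards [hnear] with ζ hζ
    simp only [add_zero, hHeq x₁ hx₁]
    linarith [hle _ hζ.1 hζ.2]
  obtain ⟨hsub, hne⟩ := hH x₁ (by linarith) (by linarith)
  exact hne (hsub.gradient_eq_zero_of_isContact hp.le hv
    (hD (mem_closedBall_iff_norm.2 (by linarith))) hcontact)

theorem IsNormalizedSolution.eventually_eq_of_isLocalMin (hp : 1 < p) (hs : 1 < s)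
    (hv : IsNormalizedSolution p s σ D v) (hD : IsOpen D) {x₀ : E} (hx₀ : x₀ ∈ D)
    (hmin : IsLocalMin v x₀) : ∀ᶠ y in 𝓝 x₀, v y = v x₀ := by
  by_contra hne
  obtain ⟨δ, hδ, hball⟩ := Metric.eventually_nhds_iff_ball.1
    ((hD.eventually_mem hx₀).and hmin)
  obtain ⟨y, x₁, hR, hvx₁, hsub, hlt⟩ := exists_touching_ball hδ
    (hv.continuousOn.mono fun z hz => (hball z hz).1) (fun z hz => (hball z hz).2) hne
  refine hv.false_of_touching_ball hp hs hR (dist_eq_norm x₁ y).symm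
    (fun z hz => (hball z (hsub hz)).1) (fun z hz => ?_) (hvx₁ ▸ hlt)
  exact hvx₁ ▸ (hball z (hsub hz)).2

lemma IsNormalizedSolution.eqOn_of_isPreconnected (hp : 1 < p) (hs : 1 < s)
    (hv : IsNormalizedSolution p s σ D v) (hD : IsOpen D) {S : Set E} (hS : IsPreconnected S)
    (hSD : S ⊆ D) {z : E} (hz : z ∈ S) (hmin : ∀ x ∈ D, v z ≤ v x) : ∀ x ∈ S, v x = v z := by
  have hloc : ∀ x ∈ D, v x = v z → x ∈ interior (v ⁻¹' {v z}) := fun x hx hxz => by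
    have hlocmin : IsLocalMin v x := by
      filter_upwards [hD.mem_nhds hx] with y hy using hxz ▸ hmin y hy
    have := hv.eventually_eq_of_isLocalMin hp hs hD hx hlocmin
    rw [hxz] at this
    exact mem_interior_iff_mem_nhds.2 this
  have hopen : IsOpen (D ∩ v ⁻¹' {v z}ᶜ) :=
    hv.continuousOn.isOpen_inter_preimage hD isOpen_compl_singleton
  have hsub := hS.subset_left_of_subset_union isOpen_interior hopen
    (Set.disjoint_left.2 fun x hx hx' =>
      hx'.2 (interior_subset (s := v ⁻¹' {v z}) hx))
    (fun x hx => by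
      by_cases hxz : v x = v z
      · exact Or.inl (hloc x (hSD hx) hxz)
      · exact Or.inr ⟨hSD hx, hxz⟩) ⟨z, hz, hloc z (hSD hz) rfl⟩
  exact fun x hx => interior_subset (s := v ⁻¹' {v z}) (hsub hx)

end StrongMinimum

section Subcritical

/-- The subcritical range of exponents in dimension `n`. With `s = q - p + 2` it is the range
`p - 1 < q < q_c` of the problem. -/
structure IsSubcritical (n p s : ℝ) : Prop where
  two_le : 2 ≤ n
  one_lt_p : 1 < p
  p_le : p ≤ n
  one_lt_s : 1 < s
  sub_one_mul_lt : (s - 1) * (n - 1) < p - 1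

lemma IsSubcritical.exists_barrier_exponent {n p s : ℝ} (h : IsSubcritical n p s) :
    ∃ γ, s - 1 < γ ∧ γ < 1 ∧ γ < n + p - 3 := by
  obtain ⟨hn, hp, hpn, -, hlt⟩ := h
  obtain ⟨γ, hsγ, hγ⟩ := exists_between ((lt_div_iff₀ (by linarith)).2 hlt)
  have hγn : γ * (n - 1) < p - 1 := (lt_div_iff₀ (by linarith)).1 hγ
  exact ⟨γ, hsγ, by nlinarith, by nlinarith⟩

lemma IsSubcritical.two_le_finrank {E : Type*} [NormedAddCommGroup E] [InnerProductSpace ℝ E]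
    {p s : ℝ} (h : IsSubcritical (Module.finrank ℝ E) p s) : 2 ≤ Module.finrank ℝ E := by
  exact_mod_cast h.two_le

lemma IsSubcritical.nontrivial {E : Type*} [NormedAddCommGroup E] [InnerProductSpace ℝ E]
    {p s : ℝ} (h : IsSubcritical (Module.finrank ℝ E) p s) : Nontrivial E :=
  Module.nontrivial_of_finrank_pos (R := ℝ) (by linarith [h.two_le_finrank])

end Subcritical

section BarrierEstimates

variable {n p s γ A C c ε r ρ τ : ℝ}

lemma le_rpow_mul_rpow_of_rpow_le {a : ℝ} (hρ : 0 < ρ) (hγ0 : 0 < γ) (hγ1 : γ ≤ 1)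
    (h : ρ ^ γ ≤ a) : ρ ≤ a ^ ((1 - γ) / γ) * ρ ^ γ := calc
  ρ = (ρ ^ γ) ^ ((1 - γ) / γ) * ρ ^ γ := by
    rw [← Real.rpow_mul hρ.le, mul_div_cancel₀ _ hγ0.ne', ← Real.rpow_add hρ, sub_add_cancel,
      Real.rpow_one]
  _ ≤ a ^ ((1 - γ) / γ) * ρ ^ γ := by
    gcongr

lemma mul_rpow_le_barrier_coeff_of_two_le (hp : 2 ≤ p) (hpn : p ≤ n) (hγ0 : 0 ≤ γ)
    (hc : 0 ≤ c) (hρ : 0 ≤ ρ) (hτ : 0 ≤ τ) :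
    (n - 1 - γ * (p - 1)) * ρ ^ γ ≤ c * ρ * (n - p + 2 * (p - 2) * τ)
      + ρ ^ γ * (n - 1 - γ * (p - 1) + (p - 2) * (1 + γ) * τ) := by
  have hpτ : 0 ≤ (p - 2) * τ := mul_nonneg (by linarith) hτ
  have hlinear : 0 ≤ c * ρ * (n - p + 2 * (p - 2) * τ) := by
    have : 0 ≤ n - p + 2 * (p - 2) * τ := by linarith
    positivity
  have hpower : 0 ≤ ρ ^ γ * ((p - 2) * τ * (1 + γ)) := by positivity
  linarith

-- For `p < 2` the coefficient of `c * ρ` is negative when `τ` is close to `1`, but then the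
-- constraint bounds `ρ`, so that the power `ρ ^ γ` dominates if `c` is small.
lemma exists_mul_rpow_le_barrier_coeff_of_lt_two (hn : 2 ≤ n) (hp : 1 < p) (hp2 : p < 2)
    (hγ0 : 0 < γ) (hγ1 : γ < 1) (hγ2 : γ < n + p - 3) (hA : 0 ≤ A) :
    ∃ c ∈ Ioc (0 : ℝ) 1, ∃ κ > 0, ∀ ρ > 0, ∀ τ ∈ Icc (0 : ℝ) 1,
      (c * ρ + ρ ^ γ) ^ 2 * τ ≤ A ^ 2 → κ * ρ ^ γ ≤ c * ρ * (n - p + 2 * (p - 2) * τ)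
        + ρ ^ γ * (n - 1 - γ * (p - 1) + (p - 2) * (1 + γ) * τ) := by
  set κ := n + p - 3 - γ
  have hκ0 : 0 < κ := by linarith
  set M := (2 * A) ^ ((1 - γ) / γ)
  have hM : 0 ≤ M := by positivity
  set c := min 1 (κ / (4 * (M + 1)))
  have hc : 0 < c := by positivity
  refine ⟨c, ⟨hc, min_le_left _ _⟩, κ / 2, by positivity, fun ρ hρ τ ⟨hτ0, hτ1⟩ hcon => ?_⟩
  have hP : 0 < ρ ^ γ := by positivity
  have hpower : ρ ^ γ * κ ≤ ρ ^ γ * (n - 1 - γ * (p - 1) + (p - 2) * (1 + γ) * τ) := by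
    gcongr
    nlinarith [mul_nonneg (mul_nonneg (sub_nonneg.2 hp2.le) (by linarith : 0 ≤ 1 + γ))
      (sub_nonneg.2 hτ1)]
  rcases le_or_gt τ (1 / 2) with hτ | hτ
  · have hlinear : 0 ≤ c * ρ * (n - p + 2 * (p - 2) * τ) :=
      mul_nonneg (by positivity) (by nlinarith)
    linarith [mul_pos hP hκ0]
  · have hPA : ρ ^ γ ≤ 2 * A := by
      have hle : ρ ^ γ ≤ c * ρ + ρ ^ γ := le_add_of_nonneg_left (by positivity)
      exact le_of_sq_le_sq (by nlinarith) (by positivity)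
    have hlinear : c * ρ * (-2) ≤ c * ρ * (n - p + 2 * (p - 2) * τ) := by
      gcongr
      nlinarith
    have hsmall : c * ρ * 2 ≤ ρ ^ γ * (κ / 2) := calc
      c * ρ * 2 ≤ κ / (4 * (M + 1)) * (M * ρ ^ γ) * 2 := by
        gcongr
        · exact min_le_right _ _
        · exact le_rpow_mul_rpow_of_rpow_le hρ hγ0 hγ1.le hPA
      _ = ρ ^ γ * (κ / 2) * (M / (M + 1)) := by field_simp; ring
      _ ≤ ρ ^ γ * (κ / 2) := mul_le_of_le_one_right (by positivity)
        ((div_le_one (by positivity)).2 (by linarith))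
    linarith

lemma exists_mul_rpow_le_barrier_coeff (hn : 2 ≤ n) (hp : 1 < p) (hpn : p ≤ n) (hγ0 : 0 < γ)
    (hγ1 : γ < 1) (hγ2 : γ < n + p - 3) (hA : 0 ≤ A) :
    ∃ c ∈ Ioc (0 : ℝ) 1, ∃ κ > 0, ∀ ρ > 0, ∀ τ ∈ Icc (0 : ℝ) 1,
      (c * ρ + ρ ^ γ) ^ 2 * τ ≤ A ^ 2 → κ * ρ ^ γ ≤ c * ρ * (n - p + 2 * (p - 2) * τ)
        + ρ ^ γ * (n - 1 - γ * (p - 1) + (p - 2) * (1 + γ) * τ) := by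
  rcases lt_or_ge p 2 with hp2 | hp2
  · exact exists_mul_rpow_le_barrier_coeff_of_lt_two hn hp hp2 hγ0 hγ1 hγ2 hA
  · exact ⟨1, ⟨one_pos, le_rfl⟩, n - 1 - γ * (p - 1), by nlinarith, fun ρ hρ τ hτ _ =>
      mul_rpow_le_barrier_coeff_of_two_le hp2 hpn hγ0.le zero_le_one hρ.le hτ.1⟩

lemma add_rpow_rpow_mul_le (hs : 1 ≤ s) (hγ0 : 0 ≤ γ) (hγ1 : γ ≤ 1) (hε0 : 0 < ε) (hε1 : ε ≤ 1)
    (hr0 : 0 < r) (hr1 : r ≤ 1) :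
    (ε / r + (ε / r) ^ γ) ^ s * r ≤ 2 ^ s * (ε / r) ^ γ * r ^ (1 - s + γ) := by
  set ρ := ε / r with hρ
  have hρ0 : 0 < ρ := div_pos hε0 hr0
  have hP : 0 < ρ ^ γ := by positivity
  rcases le_total ρ 1 with hle | hge
  · have hρP : ρ ≤ ρ ^ γ := Real.self_le_rpow_of_le_one hρ0.le hle hγ1
    have hPs : (ρ ^ γ) ^ s ≤ ρ ^ γ :=
      Real.rpow_le_self_of_le_one hP.le (Real.rpow_le_one hρ0.le hle hγ0) hs
    have hr : r ≤ r ^ (1 - s + γ) := Real.self_le_rpow_of_le_one hr0.le hr1 (by linarith)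
    calc (ρ + ρ ^ γ) ^ s * r ≤ (2 * ρ ^ γ) ^ s * r := by gcongr; linarith
      _ = 2 ^ s * (ρ ^ γ) ^ s * r := by rw [Real.mul_rpow zero_le_two hP.le]
      _ ≤ 2 ^ s * ρ ^ γ * r ^ (1 - s + γ) := by gcongr
  · have hPρ : ρ ^ γ ≤ ρ := Real.rpow_le_self_of_one_le hge hγ1
    have hsplit : ρ ^ s * r = ρ ^ γ * (ε ^ (s - γ) * r ^ (1 - s + γ)) := by
      have hρs : ρ ^ s = ρ ^ γ * ρ ^ (s - γ) := by rw [← Real.rpow_add hρ0, add_sub_cancel]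
      have hrs : r ^ (1 - s + γ) = r / r ^ (s - γ) := by
        rw [sub_add, Real.rpow_sub hr0, Real.rpow_one]
      rw [hρs, hrs, hρ, Real.div_rpow hε0.le hr0.le (s - γ)]
      ring
    calc (ρ + ρ ^ γ) ^ s * r ≤ (2 * ρ) ^ s * r := by gcongr; linarith
      _ = 2 ^ s * (ρ ^ γ * (ε ^ (s - γ) * r ^ (1 - s + γ))) := by
        rw [Real.mul_rpow zero_le_two hρ0.le, mul_assoc, hsplit]
      _ ≤ 2 ^ s * (ρ ^ γ * (1 * r ^ (1 - s + γ))) := by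
        gcongr
        exact Real.rpow_le_one hε0.le hε1 (by linarith)
      _ = 2 ^ s * ρ ^ γ * r ^ (1 - s + γ) := by ring

lemma exists_eventually_lt_barrier_coeff (h : IsSubcritical n p s) (hsγ : s - 1 < γ) (hγ1 : γ < 1)
    (hγ2 : γ < n + p - 3) (hA : 0 ≤ A) (hC : 0 ≤ C) :
    ∃ c > 0, ∀ᶠ r : ℝ in 𝓝[>] 0, ∀ ε ∈ Ioc (0 : ℝ) 1, ∀ τ ∈ Icc (0 : ℝ) 1,
      (c * (ε / r) + (ε / r) ^ γ) ^ 2 * τ ≤ A ^ 2 →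
      C * (c * (ε / r) + (ε / r) ^ γ) ^ s < (c * (ε / r) * (n - p + 2 * (p - 2) * τ)
        + (ε / r) ^ γ * (n - 1 - γ * (p - 1) + (p - 2) * (1 + γ) * τ)) / r := by
  have hs := h.one_lt_s
  have hγ0 : 0 < γ := by linarith
  obtain ⟨c, ⟨hc0, hc1⟩, κ, hκ, hcoeff⟩ :=
    exists_mul_rpow_le_barrier_coeff h.two_le h.one_lt_p h.p_le hγ0 hγ1 hγ2 hA
  refine ⟨c, hc0, ?_⟩
  filter_upwards [Ioc_mem_nhdsGT (zero_lt_one' ℝ), eventually_mul_rpow_lt (b := C * 2 ^ s)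
    (show 0 < 1 - s + γ by linarith) hκ] with r ⟨hr0, hr1⟩ hsmall ε ⟨hε0, hε1⟩ τ hτ hcon
  have hρ0 : 0 < ε / r := by positivity
  rw [lt_div_iff₀ hr0]
  calc C * (c * (ε / r) + (ε / r) ^ γ) ^ s * r
      ≤ C * ((ε / r + (ε / r) ^ γ) ^ s * r) := by
        rw [mul_assoc]
        gcongr
        exact mul_le_of_le_one_left hρ0.le hc1
    _ ≤ C * (2 ^ s * (ε / r) ^ γ * r ^ (1 - s + γ)) := by
        gcongr ?_ * ?_
        exact add_rpow_rpow_mul_le hs.le hγ0.le hγ1.le hε0 hε1 hr0 hr1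
    _ = C * 2 ^ s * r ^ (1 - s + γ) * (ε / r) ^ γ := by ring
    _ < κ * (ε / r) ^ γ := by gcongr
    _ ≤ _ := hcoeff _ hρ0 τ hτ hcon

end BarrierEstimates

section SingularBarrier

variable {c γ ε R r t : ℝ}

/-- The barrier near an isolated singularity, as a function of `t = |x|²`. It vanishes for
`|x| = R` and tends to `-∞` as `x → 0`, and to `0` as `ε → 0` for fixed `x`. -/
noncomputable def singularBarrier (c γ ε R t : ℝ) : ℝ :=
  c * ε / 2 * (Real.log t - Real.log (R ^ 2))
    + ε ^ γ / (1 - γ) * (t ^ ((1 - γ) / 2) - (R ^ 2) ^ ((1 - γ) / 2))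

/-- Twice the derivative of `singularBarrier`, so that `singularBarrierSlope c γ ε (|x|²) • x` is
the gradient of the barrier at `x`. -/
noncomputable def singularBarrierSlope (c γ ε t : ℝ) : ℝ :=
  c * ε * t⁻¹ + ε ^ γ * t ^ (-((1 + γ) / 2))

lemma singularBarrier_sq_self (c γ ε R : ℝ) : singularBarrier c γ ε R (R ^ 2) = 0 := by
  simp [singularBarrier]

lemma hasDerivAt_singularBarrier (c ε R : ℝ) (hγ : γ < 1) (ht : 0 < t) :
    HasDerivAt (singularBarrier c γ ε R) (singularBarrierSlope c γ ε t / 2) t := by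
  have hγ' : 1 - γ ≠ 0 := by linarith
  refine ((((Real.hasDerivAt_log ht.ne').sub_const _).const_mul (c * ε / 2)).add
    (((Real.hasDerivAt_rpow_const (p := (1 - γ) / 2) (Or.inl ht.ne')).sub_const _).const_mul
      (ε ^ γ / (1 - γ)))).congr_deriv ?_
  rw [show (1 - γ) / 2 - 1 = -((1 + γ) / 2) by ring, singularBarrierSlope]
  field_simp

lemma rpow_mul_sq_rpow (hε : 0 < ε) (hr : 0 < r) :
    ε ^ γ * (r ^ 2) ^ (-((1 + γ) / 2)) = (ε / r) ^ γ / r := by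
  have hexp : (2 : ℕ) * (-((1 + γ) / 2)) = -γ - 1 := by push_cast; ring
  rw [Real.div_rpow hε.le hr.le, ← Real.rpow_natCast_mul hr.le, hexp,
    Real.rpow_sub_one hr.ne', Real.rpow_neg hr.le]
  field_simp

lemma singularBarrierSlope_sq (hε : 0 < ε) (hr : 0 < r) :
    singularBarrierSlope c γ ε (r ^ 2) = (c * (ε / r) + (ε / r) ^ γ) / r := by
  rw [singularBarrierSlope, rpow_mul_sq_rpow hε hr]
  field_simp

lemma hasDerivAt_singularBarrierSlope (hε : 0 < ε) (hr : 0 < r) :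
    HasDerivAt (singularBarrierSlope c γ ε)
      (-(c * (ε / r) + (1 + γ) / 2 * (ε / r) ^ γ) / r ^ 3) (r ^ 2) := by
  have hr2 : r ^ 2 ≠ 0 := by positivity
  refine (((hasDerivAt_inv hr2).const_mul (c * ε)).add
    ((Real.hasDerivAt_rpow_const (p := -((1 + γ) / 2)) (Or.inl hr2)).const_mul
      (ε ^ γ))).congr_deriv ?_
  have hpow := rpow_mul_sq_rpow (γ := γ) hε hr
  rw [Real.rpow_sub_one hr2]
  calc _ = -(c * ε) / r ^ 4 - (1 + γ) / 2 * (ε ^ γ * (r ^ 2) ^ (-((1 + γ) / 2))) / r ^ 2 := by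
        field_simp
        ring
    _ = _ := by
        rw [hpow]
        field_simp
        ring

lemma tendsto_singularBarrier_atBot (R : ℝ) (hc : 0 < c) (hε : 0 < ε) (hγ : γ < 1) :
    Tendsto (singularBarrier c γ ε R) (𝓝[>] 0) atBot := by
  have hpow := (Real.continuousAt_rpow_const 0 ((1 - γ) / 2) (Or.inr (by linarith))).tendsto
  refine Tendsto.atBot_add (Tendsto.const_mul_atBot (by positivity)
    (tendsto_atBot_add_const_right _ _ Real.tendsto_log_nhdsGT_zero))
    (((hpow.mono_left nhdsWithin_le_nhds).sub_const _).const_mul _)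

lemma tendsto_singularBarrier_zero (c R t : ℝ) (hγ : 0 < γ) :
    Tendsto (fun ε => singularBarrier c γ ε R t) (𝓝[>] 0) (𝓝 0) := by
  have hcont : ContinuousAt (fun ε => singularBarrier c γ ε R t) 0 := by
    have := Real.continuousAt_rpow_const 0 γ (Or.inr hγ.le)
    unfold singularBarrier
    fun_prop
  have hzero : singularBarrier c γ 0 R t = 0 := by
    simp [singularBarrier, Real.zero_rpow hγ.ne']
  simpa only [hzero] using hcont.tendsto.mono_left nhdsWithin_le_nhds

variable {E : Type*} [NormedAddCommGroup E] [InnerProductSpace ℝ E]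

lemma sq_mul_sub_inner_sq_le {e z ν : E} {ψ A : ℝ} (hν : ‖ν‖ = 1) (he : ‖e‖ ≤ A)
    (h : e + ψ • z = ‖e + ψ • z‖ • ν) : ψ ^ 2 * (‖z‖ ^ 2 - inner ℝ z ν ^ 2) ≤ A ^ 2 := by
  set l := ‖e + ψ • z‖
  have he' : e = l • ν - ψ • z := eq_sub_of_add_eq h
  have hinner : inner ℝ e ν = l - ψ * inner ℝ z ν := by
    simp [he', inner_sub_left, inner_smul_left, hν]
  have hnorm : ‖e‖ ^ 2 = l ^ 2 - 2 * (l * (ψ * inner ℝ z ν)) + ψ ^ 2 * ‖z‖ ^ 2 := by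
    rw [he', norm_sub_sq_real, norm_smul, norm_smul, inner_smul_left, inner_smul_right, hν,
      real_inner_comm]
    simp [mul_pow]
  calc ψ ^ 2 * (‖z‖ ^ 2 - inner ℝ z ν ^ 2) = ‖e‖ ^ 2 - inner ℝ e ν ^ 2 := by
        rw [hnorm, hinner]
        ring
    _ ≤ ‖e‖ ^ 2 := sub_le_self _ (sq_nonneg _)
    _ ≤ A ^ 2 := by gcongr

variable [FiniteDimensional ℝ E] {p s σ : ℝ}

lemma isStrictSubAt_add_radial {Φ ψ : ℝ → ℝ} {ψ' : ℝ} {φ : E → ℝ} {L : E →L[ℝ] E} {x y : E}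
    (hφ : HasHessianAt φ L x) (hΦ : ∀ᶠ t in 𝓝 (‖x - y‖ ^ 2), HasDerivAt Φ (ψ t / 2) t)
    (hψ : HasDerivAt ψ ψ' (‖x - y‖ ^ 2))
    (hlt : ∀ X ν : E, ‖ν‖ = 1 → X = gradient φ x + ψ (‖x - y‖ ^ 2) • (x - y) → X = ‖X‖ • ν →
      σ * ‖X‖ ^ s < normalizedPLaplacian p L ν + ((Module.finrank ℝ E + p - 2) * ψ (‖x - y‖ ^ 2)
        + 2 * ψ' * (‖x - y‖ ^ 2 + (p - 2) * inner ℝ (x - y) ν ^ 2))) :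
    IsStrictSubAt p s σ (fun w => φ w + Φ (‖w - y‖ ^ 2)) x := by
  refine ⟨_, hφ.add (hasHessianAt_radial hΦ hψ), fun ν hν hdir => ?_⟩
  rw [normalizedPLaplacian_add, normalizedPLaplacian_radialHessian _ _ _ _ hν]
  exact hlt _ ν hν
    (hasGradientAt_add hφ.hasGradientAt (hasGradientAt_radial hΦ.self_of_nhds)).gradient hdir

lemma isStrictSubAt_add_singularBarrier {A C : ℝ} {φ : E → ℝ} {L : E →L[ℝ] E} {y : E}
    (hc : 0 ≤ c) (hγ : γ < 1) (hε : 0 < ε) (hy : y ≠ 0) (hφ : HasHessianAt φ L y)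
    (hA : ‖gradient φ y‖ ≤ A)
    (hkey : ∀ X ν : E, ‖ν‖ = 1 → X = ‖X‖ • ν →
      σ * ‖X‖ ^ s - normalizedPLaplacian p L ν ≤ C * ‖X - gradient φ y‖ ^ s)
    (hbarrier : ∀ τ ∈ Icc (0 : ℝ) 1, (c * (ε / ‖y‖) + (ε / ‖y‖) ^ γ) ^ 2 * τ ≤ A ^ 2 →
      C * (c * (ε / ‖y‖) + (ε / ‖y‖) ^ γ) ^ s <
        (c * (ε / ‖y‖) * (Module.finrank ℝ E - p + 2 * (p - 2) * τ)
          + (ε / ‖y‖) ^ γ * (Module.finrank ℝ E - 1 - γ * (p - 1)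
            + (p - 2) * (1 + γ) * τ)) / ‖y‖) (k : ℝ) :
    IsStrictSubAt p s σ (fun w => φ w + (k + singularBarrier c γ ε R (‖w‖ ^ 2))) y := by
  have hr : 0 < ‖y‖ := norm_pos_iff.2 hy
  suffices h : IsStrictSubAt p s σ
      (fun w => φ w + (k + singularBarrier c γ ε R (‖w - 0‖ ^ 2))) y by
    simpa only [sub_zero] using h
  refine isStrictSubAt_add_radial (Φ := fun t => k + singularBarrier c γ ε R t)
    (ψ := singularBarrierSlope c γ ε)
    (ψ' := -(c * (ε / ‖y‖) + (1 + γ) / 2 * (ε / ‖y‖) ^ γ) / ‖y‖ ^ 3) hφ ?_ ?_ ?_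
  · exact (eventually_gt_nhds (by simpa using pow_pos hr 2)).mono fun t ht =>
      (hasDerivAt_singularBarrier c ε R hγ ht).const_add k
  · rw [sub_zero]
    exact hasDerivAt_singularBarrierSlope hε hr
  rintro X ν hν hX hdir
  rw [sub_zero, singularBarrierSlope_sq hε hr] at hX
  rw [sub_zero, singularBarrierSlope_sq hε hr]
  set r := ‖y‖
  set ρ := ε / r
  set i := inner ℝ y ν
  have hρ : 0 < ρ := div_pos hε hr
  have hir : i ^ 2 ≤ r ^ 2 := by
    rw [sq_le_sq, abs_norm]
    simpa [hν] using abs_real_inner_le_norm y ν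
  have hcon : ((c * ρ + ρ ^ γ) / r) ^ 2 * (r ^ 2 - i ^ 2) ≤ A ^ 2 :=
    sq_mul_sub_inner_sq_le hν hA (hX ▸ hdir)
  have hlt := hbarrier (1 - i ^ 2 / r ^ 2)
    ⟨sub_nonneg.2 ((div_le_one (by positivity)).2 hir), sub_le_self _ (by positivity)⟩
    ((by field_simp : _ = _).trans_le hcon)
  have hdist : ‖X - gradient φ y‖ = c * ρ + ρ ^ γ := by
    rw [hX, add_sub_cancel_left, norm_smul, Real.norm_of_nonneg (by positivity),
      div_mul_cancel₀ _ hr.ne']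
  refine sub_lt_iff_lt_add'.1 (((hkey X ν hν hdir).trans_lt (hdist ▸ hlt)).trans_eq ?_)
  field_simp
  ring

end SingularBarrier

section Removability

lemma tendsto_norm_sq_nhdsNE_zero {E : Type*} [NormedAddCommGroup E] :
    Tendsto (fun x : E => ‖x‖ ^ 2) (𝓝[≠] 0) (𝓝[>] 0) := by
  refine tendsto_nhdsWithin_iff.2 ⟨?_, ?_⟩
  · simpa using (tendsto_norm_zero (E := E)).pow 2 |>.mono_left nhdsWithin_le_nhds
  · filter_upwards [self_mem_nhdsWithin] with x hx
    exact pow_pos (norm_pos_iff.2 hx) 2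

variable {E : Type*} [NormedAddCommGroup E] [InnerProductSpace ℝ E] [FiniteDimensional ℝ E]
  {p s σ : ℝ}

lemma IsNormalizedSolution.le_of_eventually_le [Nontrivial E] {R : ℝ} {H v : E → ℝ} (hp : 1 ≤ p)
    (hs : s ≠ 0) (hv : IsNormalizedSolution p s σ (closedBall 0 R \ {0}) v)
    (hH : ∀ x ∈ closedBall (0 : E) R \ {0}, IsStrictSubAt p s σ H x)
    (hnear : ∀ᶠ x in 𝓝[≠] (0 : E), H x ≤ v x) (hR : ∀ x, ‖x‖ = R → H x ≤ v x) :
    ∀ x ∈ closedBall (0 : E) R \ {0}, H x ≤ v x := by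
  intro x hx
  obtain ⟨δ, hδ, hball⟩ := Metric.eventually_nhds_iff_ball.1 (eventually_nhdsWithin_iff.1 hnear)
  have hx0 : 0 < ‖x‖ := norm_pos_iff.2 hx.2
  obtain ⟨r, hr0, hr⟩ := exists_between (lt_min hδ hx0)
  obtain ⟨hrδ, hrx⟩ := lt_min_iff.1 hr
  have hne : ∀ z : E, r ≤ ‖z - 0‖ → z ≠ 0 := fun z hz h => by
    rw [h, sub_zero, norm_zero] at hz
    linarith
  refine IsNormalizedSolution.le_of_le_spheres (y := 0) (r := r) (R := R) hp hs
    (hv.mono fun z hz => ⟨hz.1, hne z (by simpa using hz.2)⟩)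
    (fun z hzr hzR => hH z ⟨mem_closedBall_iff_norm.2 hzR, hne z hzr⟩)
    (fun z hz => hball z ?_ (hne z hz.ge)) (fun z hz => hR z (by simpa using hz)) x
    (by simpa using hrx.le) (mem_closedBall_iff_norm.1 hx.1)
  rwa [mem_ball_iff_norm, hz]

-- For each `ε > 0` the barrier turns `φ + k` into a strict subsolution tending to `-∞` at the
-- origin; then `ε → 0`.
theorem eventually_forall_add_const_le {C : ℝ} {φ : E → ℝ} {M : E → E →L[ℝ] E}
    (hpar : IsSubcritical (Module.finrank ℝ E) p s) (hC : 0 ≤ C)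
    (hφ : ∀ᶠ y in 𝓝 (0 : E), HasHessianAt φ (M y) y)
    (hkey : ∀ᶠ y in 𝓝 (0 : E), ∀ X ν : E, ‖ν‖ = 1 → X = ‖X‖ • ν →
      σ * ‖X‖ ^ s - normalizedPLaplacian p (M y) ν ≤ C * ‖X - gradient φ y‖ ^ s) :
    ∀ᶠ R in 𝓝[>] (0 : ℝ), ∀ (k : ℝ) (v : E → ℝ),
      IsNormalizedSolution p s σ (closedBall 0 R \ {0}) v → (∃ B, ∀ᶠ x in 𝓝[≠] (0 : E), B ≤ v x) →
      (∀ x, ‖x‖ = R → φ x + k ≤ v x) → ∀ x ∈ closedBall (0 : E) R \ {0}, φ x + k ≤ v x := by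
  have := hpar.nontrivial
  have hs := hpar.one_lt_s
  obtain ⟨γ, hsγ, hγ1, hγ2⟩ := hpar.exists_barrier_exponent
  have hgrad : ∀ᶠ y in 𝓝 (0 : E), ‖gradient φ y‖ < ‖gradient φ 0‖ + 1 :=
    hφ.self_of_nhds.2.continuousAt.norm.eventually_lt_const (lt_add_one _)
  obtain ⟨c, hc, hcoeff⟩ := exists_eventually_lt_barrier_coeff hpar hsγ hγ1 hγ2
    (by positivity : 0 ≤ ‖gradient φ 0‖ + 1) hC
  obtain ⟨R₀, hR₀, hcoeff⟩ := mem_nhdsGT_iff_exists_Ioo_subset.1 hcoeff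
  filter_upwards [Ioo_mem_nhdsGT hR₀, nhdsWithin_le_nhds
    (eventually_closedBall_subset (hφ.and (hkey.and hgrad)))]
    with R hR hball k v hv ⟨B, hB⟩ hbd x hx
  have hlim := ((tendsto_singularBarrier_zero c R (‖x‖ ^ 2) (by linarith : 0 < γ)).const_add
    k).const_add (φ x)
  rw [add_zero] at hlim
  refine le_of_tendsto hlim ?_
  filter_upwards [Ioc_mem_nhdsGT (zero_lt_one' ℝ)] with ε hε
  refine hv.le_of_eventually_le (H := fun w => φ w + (k + singularBarrier c γ ε R (‖w‖ ^ 2)))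
    hpar.one_lt_p.le (by linarith) (fun y hy => ?_) ?_ (fun z hz => ?_) x hx
  · obtain ⟨hφy, hkeyy, hgrady⟩ := hball hy.1
    have hy0 : 0 < ‖y‖ := norm_pos_iff.2 hy.2
    exact isStrictSubAt_add_singularBarrier hc.le hγ1 hε.1 hy.2 hφy hgrady.le hkeyy
      (hcoeff ⟨hy0, (mem_closedBall_zero_iff.1 hy.1).trans_lt hR.2⟩ ε hε) k
  · have hbot : Tendsto (fun w : E => φ w + (k + singularBarrier c γ ε R (‖w‖ ^ 2)))
        (𝓝[≠] 0) atBot :=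
      (hφ.self_of_nhds.hasGradientAt.differentiableAt.continuousAt.tendsto.mono_left
        nhdsWithin_le_nhds).add_atBot (tendsto_atBot_add_const_left _ _
          ((tendsto_singularBarrier_atBot R hc hε.1 hγ1).comp tendsto_norm_sq_nhdsNE_zero))
    filter_upwards [hbot.eventually_le_atBot B, hB] with w hw hBw using hw.trans hBw
  · simpa [hz, singularBarrier_sq_self] using hbd z hz

end Removability

section StrictInequality

variable {E : Type*} [NormedAddCommGroup E] [InnerProductSpace ℝ E] [FiniteDimensional ℝ E]
  {p s σ : ℝ}

lemma eventually_prod_lt_normalizedPLaplacian {F : Type*} [TopologicalSpace F]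
    {M : F → E →L[ℝ] E} {a : F} {X₀ : E} (hs : 0 ≤ s) (hM : ContinuousAt M a) (hX₀ : X₀ ≠ 0)
    (h : σ * ‖X₀‖ ^ s < normalizedPLaplacian p (M a) (normalize X₀)) :
    ∀ᶠ z in 𝓝 (a, X₀), ∀ ν : E, ‖ν‖ = 1 → z.2 = ‖z.2‖ • ν →
      σ * ‖z.2‖ ^ s < normalizedPLaplacian p (M z.1) ν := by
  have hnormalize : ContinuousAt (fun z : F × E => normalize z.2) (a, X₀) :=
    (continuousAt_snd.norm.inv₀ (norm_ne_zero_iff.2 hX₀)).smul continuousAt_snd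
  have hMfst : ContinuousAt (fun z : F × E => M z.1) (a, X₀) :=
    ContinuousAt.comp (f := Prod.fst) (x := (a, X₀)) hM continuousAt_fst
  have hright : ContinuousAt
      (fun z : F × E => normalizedPLaplacian p (M z.1) (normalize z.2)) (a, X₀) :=
    (continuous_normalizedPLaplacian p).continuousAt.comp (hMfst.prodMk hnormalize)
  have hleft : ContinuousAt (fun z : F × E => σ * ‖z.2‖ ^ s) (a, X₀) :=
    (continuousAt_snd.norm.rpow_const (Or.inr hs)).const_mul σ
  filter_upwards [hleft.eventually_lt hright h, continuousAt_snd.eventually_ne hX₀]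
    with z hz hz0 ν hν hzν
  rwa [hzν, NormedSpace.normalize_smul_of_pos (norm_pos_iff.2 hz0),
    NormedSpace.normalize_eq_self_of_norm_eq_one hν, ← hzν] at hz

lemma exists_sub_normalizedPLaplacian_le_of_le_norm_sub (p σ A B : ℝ) {g : ℝ} (hs : 0 ≤ s)
    (hA : 0 ≤ A) (hg : 0 < g) :
    ∃ C, 0 ≤ C ∧ ∀ (L : E →L[ℝ] E) (X Y ν : E), ‖L‖ ≤ B → ‖Y‖ ≤ A → g ≤ ‖X - Y‖ → ‖ν‖ = 1 →
      σ * ‖X‖ ^ s - normalizedPLaplacian p L ν ≤ C * ‖X - Y‖ ^ s := by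
  obtain ⟨K, hK, hbound⟩ := exists_abs_normalizedPLaplacian_le (E := E) p B
  refine ⟨|σ| * (A / g + 1) ^ s + K / g ^ s, by positivity, fun L X Y ν hL hY hX hν => ?_⟩
  have hXle : ‖X‖ ≤ (A / g + 1) * ‖X - Y‖ := calc
    ‖X‖ ≤ ‖Y‖ + ‖X - Y‖ := norm_le_norm_add_norm_sub' X Y
    _ ≤ A / g * g + ‖X - Y‖ := by rw [div_mul_cancel₀ A hg.ne']; gcongr
    _ ≤ A / g * ‖X - Y‖ + ‖X - Y‖ := by gcongr
    _ = _ := by ring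
  have hpow : σ * ‖X‖ ^ s ≤ |σ| * (A / g + 1) ^ s * ‖X - Y‖ ^ s := calc
    σ * ‖X‖ ^ s ≤ |σ| * ((A / g + 1) * ‖X - Y‖) ^ s := by
      gcongr
      exact le_abs_self σ
    _ = _ := by rw [Real.mul_rpow (by positivity) (norm_nonneg _), mul_assoc]
  have hoperator : -normalizedPLaplacian p L ν ≤ K / g ^ s * ‖X - Y‖ ^ s := calc
    -normalizedPLaplacian p L ν ≤ K := (neg_le_abs _).trans (hbound L ν hL hν)
    _ = K / g ^ s * g ^ s := by field_simp
    _ ≤ _ := by gcongr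
  linarith

/-- Near `∇φ(0)` the left side is negative, away from it it is at most of order `‖X‖ ^ s`. -/
lemma exists_eventually_sub_normalizedPLaplacian_le {φ : E → ℝ} {M : E → E →L[ℝ] E} (hs : 0 ≤ s)
    (hφ : ContinuousAt (gradient φ) 0) (hM : ContinuousAt M 0) (h0 : gradient φ 0 ≠ 0)
    (hstrict : σ * ‖gradient φ 0‖ ^ s
      < normalizedPLaplacian p (M 0) (normalize (gradient φ 0))) :
    ∃ C, 0 ≤ C ∧ ∀ᶠ y in 𝓝 (0 : E), ∀ X ν : E, ‖ν‖ = 1 → X = ‖X‖ • ν →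
      σ * ‖X‖ ^ s - normalizedPLaplacian p (M y) ν ≤ C * ‖X - gradient φ y‖ ^ s := by
  obtain ⟨δ, hδ, hnear⟩ := Metric.eventually_nhds_iff_ball.1
    (eventually_prod_lt_normalizedPLaplacian hs hM h0 hstrict)
  obtain ⟨C, hC, hfar⟩ := exists_sub_normalizedPLaplacian_le_of_le_norm_sub (E := E) p σ
    (‖gradient φ 0‖ + 1) (‖M 0‖ + 1) hs (by positivity) (half_pos hδ)
  refine ⟨C, hC, ?_⟩
  filter_upwards [hφ.eventually (ball_mem_nhds _ (half_pos hδ)), ball_mem_nhds (0 : E) hδ,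
    hφ.norm.eventually_le_const (lt_add_one _), hM.norm.eventually_le_const (lt_add_one _)]
    with y hyφ hy hA hB X ν hν hX
  rcases le_or_gt (δ / 2) ‖X - gradient φ y‖ with hge | hlt
  · exact hfar (M y) X (gradient φ y) ν hB hA hge hν
  · have hX0 : X ∈ ball (gradient φ 0) δ := by
      rw [← dist_eq_norm] at hlt
      rw [mem_ball]
      linarith [dist_triangle X (gradient φ y) (gradient φ 0)]
    have := hnear (y, X) (by rw [← ball_prod_same]; exact ⟨hy, hX0⟩) ν hν hX
    exact (sub_neg.2 this).le.trans (by positivity)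

end StrictInequality

section PuncturedSolution

variable {E : Type*} [NormedAddCommGroup E] [InnerProductSpace ℝ E] [FiniteDimensional ℝ E]
  {p s σ : ℝ} {D : Set E} {H V φ : E → ℝ}

/-- A solution of the normalised equation on `D \ {0}` whose value at the origin, if the origin
lies in `D`, is its lower limit there. Nothing is assumed about the equation at the origin. -/
structure IsPuncturedSolution (p s σ : ℝ) (D : Set E) (V : E → ℝ) : Prop where
  isNormalizedSolution : IsNormalizedSolution p s σ (D \ {0}) V
  eventually_sub_lt : 0 ∈ D → ∀ η > 0, ∀ᶠ x in 𝓝[≠] (0 : E), V 0 - η < V x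
  frequently_lt_add : 0 ∈ D → ∀ η > 0, ∃ᶠ x in 𝓝[≠] (0 : E), V x < V 0 + η

namespace IsPuncturedSolution

lemma lowerSemicontinuousOn (hV : IsPuncturedSolution p s σ D V) {C : Set E}
    (hC : ContinuousOn V (C \ {0})) (h0 : 0 ∈ C → 0 ∈ D) : LowerSemicontinuousOn V C := by
  intro x hx y hy
  rcases eq_or_ne x 0 with rfl | hx0
  · refine eventually_nhdsWithin_of_eventually_nhds ?_
    have := hV.eventually_sub_lt (h0 hx) (V 0 - y) (sub_pos.2 hy)
    rw [eventually_nhdsWithin_iff] at this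
    filter_upwards [this] with z hz
    rcases eq_or_ne z 0 with rfl | hz0
    · exact hy
    · simpa using hz hz0
  · have hcont : ContinuousWithinAt V C x := (hC x ⟨hx, hx0⟩).mono_of_mem_nhdsWithin
      (inter_mem self_mem_nhdsWithin
        (mem_nhdsWithin_of_mem_nhds (isOpen_compl_singleton.mem_nhds hx0)))
    exact hcont.eventually_const_lt hy

lemma le_apply_zero (hV : IsPuncturedSolution p s σ D V) (h0 : (0 : E) ∈ D)
    (hH : ContinuousAt H 0) (hle : ∀ᶠ x in 𝓝[≠] (0 : E), H x ≤ V x) : H 0 ≤ V 0 := by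
  by_contra! hlt
  have hη : 0 < (H 0 - V 0) / 2 := by linarith
  obtain ⟨x, hVx, hHx, hHV⟩ := ((hV.frequently_lt_add h0 _ hη).and_eventually
    (((hH.eventually_const_lt (sub_lt_self (H 0) hη)).filter_mono nhdsWithin_le_nhds).and
      hle)).exists
  linarith

lemma exists_eventually_le (hV : IsPuncturedSolution p s σ D V) (h0 : (0 : E) ∈ D) :
    ∃ B, ∀ᶠ x in 𝓝[≠] (0 : E), B ≤ V x :=
  ⟨V 0 - 1, (hV.eventually_sub_lt h0 1 one_pos).mono fun _ h => h.le⟩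

end IsPuncturedSolution

lemma hasGradientAt_const_mul_norm_sq (c : ℝ) (x : E) :
    HasGradientAt (fun y => c * ‖y‖ ^ 2) ((2 * c) • x) x := by
  simpa using hasGradientAt_radial (Φ := fun t => c * t) (ψ := 2 * c) (x := x) (y := 0)
    (by simpa using (hasDerivAt_id _).const_mul c)

lemma hasHessianAt_const_mul_norm_sq (c : ℝ) (x : E) :
    HasHessianAt (fun y => c * ‖y‖ ^ 2) ((2 * c) • ContinuousLinearMap.id ℝ E) x :=
  .of_hasGradientAt (.of_forall fun y => hasGradientAt_const_mul_norm_sq c y)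
    ((hasFDerivAt_id x).const_smul (2 * c))

lemma exists_strict_sub_const_mul_norm_sq (hφ : ContDiffAt ℝ 2 φ 0)
    (hstrict : σ * ‖gradient φ 0‖ ^ s
      < normalizedPLaplacian p (fderiv ℝ (gradient φ) 0) (normalize (gradient φ 0))) :
    ∃ κ > 0, gradient (fun x => φ x - κ * ‖x‖ ^ 2) 0 = gradient φ 0 ∧
      σ * ‖gradient φ 0‖ ^ s
        < normalizedPLaplacian p (fderiv ℝ (gradient fun x => φ x - κ * ‖x‖ ^ 2) 0)
          (normalize (gradient φ 0)) := by
  set ν := normalize (gradient φ 0)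
  have hlim : Tendsto (fun κ => normalizedPLaplacian p (fderiv ℝ (gradient φ) 0) ν
      - 2 * κ * normalizedPLaplacian p (ContinuousLinearMap.id ℝ E) ν) (𝓝[>] 0)
      (𝓝 (normalizedPLaplacian p (fderiv ℝ (gradient φ) 0) ν)) := by
    refine tendsto_nhdsWithin_of_tendsto_nhds ?_
    exact Continuous.tendsto' (by fun_prop) _ _ (by simp)
  obtain ⟨κ, hκ, hlt⟩ := (eventually_mem_nhdsWithin.and (hlim.eventually_const_lt hstrict)).exists
  have hHess := (eventually_hasHessianAt hφ).self_of_nhds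
  refine ⟨κ, hκ, ?_, ?_⟩
  · simpa [sub_eq_add_neg] using
      (hasGradientAt_add hHess.hasGradientAt (hasGradientAt_const_mul_norm_sq (-κ) 0)).gradient
  · rwa [(hHess.sub (hasHessianAt_const_mul_norm_sq κ 0)).2.fderiv, normalizedPLaplacian_sub,
      normalizedPLaplacian_smul]

-- With `φ - κ |x|²` in place of `φ` there is room on small spheres, so `V` is strictly above
-- `φ - κ |x|²` at the origin as well.
theorem IsPuncturedSolution.not_isLocalMax_sub (hpar : IsSubcritical (Module.finrank ℝ E) p s)
    (hV : IsPuncturedSolution p s σ D V) (hD : IsOpen D) (h0 : (0 : E) ∈ D)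
    (hφ : ContDiffAt ℝ 2 φ 0) (hgrad : gradient φ 0 ≠ 0)
    (hstrict : σ * ‖gradient φ 0‖ ^ s
      < normalizedPLaplacian p (fderiv ℝ (gradient φ) 0) (normalize (gradient φ 0))) :
    ¬ IsLocalMax (fun x => φ x - V x) 0 := by
  intro hmax
  obtain ⟨κ, hκ, hgradψ, hstrictψ⟩ := exists_strict_sub_const_mul_norm_sq hφ hstrict
  set ψ : E → ℝ := fun x => φ x - κ * ‖x‖ ^ 2 with hψdef
  have hψ : ContDiffAt ℝ 2 ψ 0 := hφ.sub (contDiff_const.mul (contDiff_norm_sq ℝ)).contDiffAt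
  have hHess := eventually_hasHessianAt hψ
  obtain ⟨C, hC, hkey⟩ := exists_eventually_sub_normalizedPLaplacian_le
    (zero_le_one.trans hpar.one_lt_s.le) hHess.self_of_nhds.2.continuousAt
    (continuousAt_fderiv_gradient hψ) (hgradψ ▸ hgrad) (by rwa [hgradψ])
  have hnear : ∀ᶠ R in 𝓝 (0 : ℝ), closedBall (0 : E) R ⊆ D ∩ {x | φ x - V x ≤ φ 0 - V 0} :=
    eventually_closedBall_subset (inter_mem (hD.mem_nhds h0) hmax)
  obtain ⟨R, hrem, hball, hR : 0 < R⟩ := ((eventually_forall_add_const_le hpar hC hHess hkey).and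
    ((hnear.filter_mono nhdsWithin_le_nhds).and eventually_mem_nhdsWithin)).exists
  set k := V 0 - φ 0 + κ * R ^ 2 with hk
  have hle := hrem k V (hV.1.mono (sdiff_subset_sdiff_left fun x hx => (hball hx).1))
    (hV.exists_eventually_le h0) fun x hx => by
      have : φ x - V x ≤ φ 0 - V 0 := (hball (mem_closedBall_zero_iff.2 hx.le)).2
      simp only [hψdef, hx, hk]
      linarith
  have hzero : ψ 0 + k ≤ V 0 :=
    hV.le_apply_zero h0 (H := fun x => ψ x + k) (hψ.continuousAt.add continuousAt_const) <| by
      filter_upwards [nhdsWithin_le_nhds (closedBall_mem_nhds (0 : E) hR),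
        eventually_mem_nhdsWithin] with x hx hx0 using hle x ⟨hx, hx0⟩
  have : 0 < κ * R ^ 2 := by positivity
  simp only [hψdef, hk, norm_zero] at hzero
  linarith

lemma IsPuncturedSolution.eventually_forall_le_apply_zero
    (hpar : IsSubcritical (Module.finrank ℝ E) p s) (hV : IsPuncturedSolution p s σ D V)
    (hD : IsOpen D) (h0 : (0 : E) ∈ D) :
    ∀ᶠ R in 𝓝[>] (0 : ℝ), ∀ k, (∀ x ∈ sphere (0 : E) R, k ≤ V x) → k ≤ V 0 := by
  have hconst : ∀ y : E, HasHessianAt (fun _ : E => (0 : ℝ)) 0 y := fun y =>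
    .of_hasGradientAt (X := fun _ => 0) (.of_forall fun x => hasGradientAt_const x 0)
      (hasFDerivAt_const 0 y)
  have hrem := eventually_forall_add_const_le (σ := σ) hpar (abs_nonneg σ) (.of_forall hconst)
    (.of_forall fun y X ν _ _ => by
      have hnull : normalizedPLaplacian p (0 : E →L[ℝ] E) ν = 0 := by
        simpa using normalizedPLaplacian_smul p 0 (0 : E →L[ℝ] E) ν
      rw [hnull, (hconst y).hasGradientAt.gradient, gradient_fun_const]
      simp only [sub_zero]
      gcongr
      exact le_abs_self σ)
  filter_upwards [hrem, eventually_mem_nhdsWithin,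
    nhdsWithin_le_nhds (eventually_closedBall_subset (hD.mem_nhds h0))] with R hR hR0 hball k hk
  have hle := hR k V (hV.1.mono (sdiff_subset_sdiff_left hball)) (hV.exists_eventually_le h0)
    fun x hx => by simpa using hk x (mem_sphere_zero_iff_norm.2 hx)
  refine hV.le_apply_zero h0 (H := fun _ => k) continuousAt_const ?_
  filter_upwards [nhdsWithin_le_nhds (closedBall_mem_nhds (0 : E) hR0),
    eventually_mem_nhdsWithin] with x hx hx0
  simpa using hle x ⟨hx, hx0⟩

-- On each small sphere the minimum `V 0` is attained, hence `V` is constant there.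
theorem IsPuncturedSolution.eventually_eq_of_isLocalMin
    (hpar : IsSubcritical (Module.finrank ℝ E) p s) (hV : IsPuncturedSolution p s σ D V)
    (hD : IsOpen D) {x₀ : E} (hx₀ : x₀ ∈ D) (hmin : IsLocalMin V x₀) :
    ∀ᶠ y in 𝓝 x₀, V y = V x₀ := by
  have := hpar.nontrivial
  rcases eq_or_ne x₀ 0 with rfl | hne
  swap
  · exact hV.1.eventually_eq_of_isLocalMin hpar.one_lt_p hpar.one_lt_s
      (hD.sdiff isClosed_singleton) ⟨hx₀, hne⟩ hmin
  obtain ⟨r, hr, hball⟩ := Metric.eventually_nhds_iff_ball.1 ((hD.eventually_mem hx₀).and hmin)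
  have hreg : IsNormalizedSolution p s σ (ball 0 r \ {0}) V :=
    hV.1.mono (sdiff_subset_sdiff_left fun y hy => (hball y hy).1)
  obtain ⟨R₀, hR₀, hsph⟩ := mem_nhdsGT_iff_exists_Ioo_subset.1
    (hV.eventually_forall_le_apply_zero hpar hD hx₀)
  filter_upwards [ball_mem_nhds (0 : E) (lt_min hr hR₀)] with x hx
  rcases eq_or_ne x 0 with rfl | hx0
  · rfl
  have hxr := (mem_ball_zero_iff.1 hx).trans_le (min_le_left _ _)
  have hsub : sphere (0 : E) ‖x‖ ⊆ ball 0 r \ {0} := fun z hz =>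
    ⟨sphere_subset_ball hxr hz, ne_of_mem_sphere hz (norm_ne_zero_iff.2 hx0)⟩
  obtain ⟨z, hz, hzmin⟩ := (isCompact_sphere (0 : E) ‖x‖).exists_isMinOn ⟨x, by simp⟩
    (hreg.continuousOn.mono hsub)
  have hzle : V z ≤ V 0 := hsph
    ⟨norm_pos_iff.2 hx0, (mem_ball_zero_iff.1 hx).trans_le (min_le_right _ _)⟩ (V z) hzmin
  have hzeq : V z = V 0 := hzle.antisymm (hball z (hsub hz).1).2
  rw [← hzeq]
  have hrank : 1 < Module.rank ℝ E := by
    rw [← Module.finrank_eq_rank]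
    exact_mod_cast hpar.two_le_finrank
  exact hreg.eqOn_of_isPreconnected hpar.one_lt_p hpar.one_lt_s
    (isOpen_ball.sdiff isClosed_singleton) (isPreconnected_sphere hrank 0 ‖x‖) hsub hz
    (fun y hy => hzeq ▸ (hball y hy.1).2) x (by simp)

lemma IsPuncturedSolution.hasFDerivAt_zero_of_isContact {τ : ℝ} {U : E → ℝ}
    (hpar : IsSubcritical (Module.finrank ℝ E) p s) (hστ : σ < τ)
    (hU : IsNormalizedSolution p s τ (D \ {0}) U) (hV : IsPuncturedSolution p s σ D V)
    (hD : IsOpen D) {a b : E} (ha : a ∈ D \ {0}) (hb : b ∈ D) (hc : IsContact U V a b) :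
    HasFDerivAt U (0 : E →L[ℝ] ℝ) a := by
  by_cases hgrad : gradient U a = 0
  · simpa [hgrad] using (hU.differentiableAt a ha).hasGradientAt.hasFDerivAt
  exfalso
  have hC2 := hU.contDiffAt a ha hgrad
  have hstrict : σ * ‖gradient U a‖ ^ s
      < normalizedPLaplacian p (fderiv ℝ (gradient U) a) (normalize (gradient U a)) := by
    rw [hU.eq a ha hgrad]
    gcongr
  rcases eq_or_ne b 0 with rfl | hb0
  · have hgradφ : gradient (fun ζ => U (a + ζ)) = fun ζ => gradient U (a + ζ) := by
      ext1 ζ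
      simp only [gradient, fderiv_comp_add_left]
    refine hV.not_isLocalMax_sub hpar hD hb (φ := fun ζ => U (a + ζ)) ?_ ?_ ?_
      (by simpa [IsContact] using hc)
    · exact ContDiffAt.comp (g := U) (f := fun ζ => a + ζ) 0 (by simpa using hC2)
        (contDiff_const.add contDiff_id).contDiffAt
    · simpa [hgradφ] using hgrad
    · simpa [hgradφ, fderiv_comp_add_left] using hstrict
  · have hsub : IsStrictSubAt p s σ U a := by
      refine ⟨_, (eventually_hasHessianAt hC2).self_of_nhds, fun ν hν hUν => ?_⟩
      have hdir : normalize (gradient U a) = ν := by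
        rw [hUν, NormedSpace.normalize_smul_of_pos (norm_pos_iff.2 hgrad),
          NormedSpace.normalize_eq_self_of_norm_eq_one hν]
      rwa [← hdir]
    exact hgrad (hsub.gradient_eq_zero_of_isContact hpar.one_lt_p.le hV.1 ⟨hb, hb0⟩ hc)

lemma IsPuncturedSolution.onlyCriticalContacts {τ : ℝ} {U : E → ℝ}
    (hpar : IsSubcritical (Module.finrank ℝ E) p s) (hστ : σ < τ)
    (hU : IsPuncturedSolution p s (-τ) D fun x => -U x) (hV : IsPuncturedSolution p s σ D V)
    (hD : IsOpen D) : OnlyCriticalContacts U V D := by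
  intro a ha b hb hab hc
  rcases eq_or_ne a 0 with rfl | ha0
  · right
    simpa using (hU.hasFDerivAt_zero_of_isContact hpar (neg_lt_neg hστ) hV.1.neg hD
      ⟨hb, hab.symm⟩ ha (isContact_neg_neg_iff.2 hc)).fun_neg
  · have hUreg : IsNormalizedSolution p s τ (D \ {0}) U := by simpa using hU.1.neg
    exact Or.inl (hV.hasFDerivAt_zero_of_isContact hpar hστ hUreg hD ⟨ha, ha0⟩ hb hc)

theorem IsPuncturedSolution.le_of_le_boundary {τ : ℝ} {C : Set E} {U : E → ℝ}
    (hpar : IsSubcritical (Module.finrank ℝ E) p s) (hστ : σ < τ) (hC : IsCompact C)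
    (hD : IsOpen D) (hDC : D ⊆ C) (h0 : 0 ∈ C → 0 ∈ D)
    (hU : IsPuncturedSolution p s (-τ) D fun x => -U x) (hV : IsPuncturedSolution p s σ D V)
    (hUc : ContinuousOn U (C \ {0})) (hVc : ContinuousOn V (C \ {0}))
    (hbd : ∀ x ∈ C \ D, U x ≤ V x) : ∀ x ∈ C, U x ≤ V x := by
  have := hpar.nontrivial
  refine (hU.onlyCriticalContacts hpar hστ hV hD).le hC hD hDC ?_
    (hV.lowerSemicontinuousOn hVc h0) (fun x hx hmax hmin => ?_) hbd
  · simpa only [Pi.neg_def, neg_neg] using (hU.lowerSemicontinuousOn hUc.neg h0).neg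
  · filter_upwards [hU.eventually_eq_of_isLocalMin hpar hD hx hmax.neg,
      hV.eventually_eq_of_isLocalMin hpar hD hx hmin] with y hUy hVy
    rw [neg_inj.1 hUy, hVy]

lemma IsNormalizedSolution.congr {v w : E → ℝ} (hv : IsNormalizedSolution p s σ D v)
    (hD : IsOpen D) (heq : EqOn w v D) : IsNormalizedSolution p s σ D w := by
  have hnear : ∀ x ∈ D, w =ᶠ[𝓝 x] v := fun x hx => heq.eventuallyEq_of_mem (hD.mem_nhds hx)
  have hgrad : EqOn (gradient w) (gradient v) D := fun x hx => by
    rw [gradient, gradient, (hnear x hx).fderiv_eq]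
  refine ⟨fun x hx => (hnear x hx).differentiableAt_iff.2 (hv.differentiableAt x hx),
    fun x hx hne => (hv.contDiffAt x hx (hgrad hx ▸ hne)).congr_of_eventuallyEq (hnear x hx),
    fun x hx hne => ?_⟩
  rw [(hgrad.eventuallyEq_of_mem (hD.mem_nhds hx)).fderiv_eq, hgrad hx]
  exact hv.eq x hx (hgrad hx ▸ hne)

lemma IsNormalizedSolution.exists_isPuncturedSolution [Nontrivial E] {a b : ℝ} {v : E → ℝ}
    (hv : IsNormalizedSolution p s σ (D \ {0}) v) (hD : IsOpen D)
    (ha : ∀ᶠ x in 𝓝[≠] (0 : E), a ≤ v x) (hb : ∀ᶠ x in 𝓝[≠] (0 : E), v x ≤ b) :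
    ∃ w : E → ℝ, EqOn w v {0}ᶜ ∧ IsPuncturedSolution p s σ D w := by
  classical
  set l := liminf v (𝓝[≠] 0)
  have hEq : EqOn (Function.update v 0 l) v {0}ᶜ := fun x hx => Function.update_of_ne hx _ _
  refine ⟨_, hEq, hv.congr (hD.sdiff isClosed_singleton) (hEq.mono fun x hx => hx.2),
    fun _ η hη => ?_, fun _ η hη => ?_⟩
  · filter_upwards [eventually_lt_of_lt_liminf (sub_lt_self l hη)
      (isBoundedUnder_of_eventually_ge ha), self_mem_nhdsWithin] with x hx hx0
    rwa [Function.update_self, hEq hx0]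
  · have : (𝓝[≠] (0 : E)).NeBot := Module.punctured_nhds_neBot ℝ E 0
    refine ((frequently_lt_of_liminf_lt (isBoundedUnder_of_eventually_le hb).isCoboundedUnder_ge
      (lt_add_of_pos_right l hη)).and_eventually self_mem_nhdsWithin).mono fun x hx => ?_
    rw [Function.update_self, hEq hx.2]
    exact hx.1

end PuncturedSolution

section Fundamental

variable {E : Type*} [NormedAddCommGroup E] [InnerProductSpace ℝ E] [FiniteDimensional ℝ E]
  {p s σ ε R m : ℝ} {Φ : ℝ → ℝ}

-- `Φ(|·|²)` is `p`-harmonic away from the origin.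
lemma isStrictSubAt_const_sub_const_mul {x : E} (m : ℝ) (hp : 1 < p) (hσ : σ < 0) (hε : 0 < ε)
    (hx : x ≠ 0) (hΦ : ∀ t > 0,
      HasDerivAt Φ (-(t ^ (-((Module.finrank ℝ E + p - 2) / (2 * (p - 1))))) / 2) t) :
    IsStrictSubAt p s σ (fun w => m - ε * Φ (‖w‖ ^ 2)) x := by
  set k := (Module.finrank ℝ E + p - 2) / (2 * (p - 1)) with hk
  have ht : 0 < ‖x‖ ^ 2 := pow_pos (norm_pos_iff.2 hx) 2
  suffices h : IsStrictSubAt p s σ (fun w => m - ε * Φ (‖w - 0‖ ^ 2)) x by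
    simpa only [sub_zero] using h
  refine isStrictSubAt_radial (Φ := fun t => m - ε * Φ t) (ψ := fun t => ε * t ^ (-k))
    (ψ' := ε * (-k * (‖x‖ ^ 2) ^ (-k - 1))) ?_ ?_ ?_ ?_ <;> rw [sub_zero]
  · positivity
  · exact (eventually_gt_nhds ht).mono fun t ht =>
      (((hΦ t ht).const_mul ε).const_sub m).congr_deriv (by ring)
  · exact (Real.hasDerivAt_rpow_const (Or.inl ht.ne')).const_mul ε
  · have hflux : (Module.finrank ℝ E + p - 2) * (ε * (‖x‖ ^ 2) ^ (-k))
        + 2 * (p - 1) * (ε * (-k * (‖x‖ ^ 2) ^ (-k - 1))) * ‖x‖ ^ 2 = 0 := by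
      have hp' : p - 1 ≠ 0 := by linarith
      rw [Real.rpow_sub_one ht.ne', hk]
      field_simp
      ring
    rw [hflux]
    exact mul_neg_of_neg_of_pos hσ (by positivity)

theorem IsNormalizedSolution.le_of_forall_eventually_neg_mul_le [Nontrivial E] {v : E → ℝ}
    (hv : IsNormalizedSolution p s σ (closedBall 0 R \ {0}) v) (hp : 1 < p) (hs : s ≠ 0)
    (hσ : σ < 0) (hΦ : ∀ t > 0,
      HasDerivAt Φ (-(t ^ (-((Module.finrank ℝ E + p - 2) / (2 * (p - 1))))) / 2) t)
    (hΦR : 0 ≤ Φ (R ^ 2)) (hm : m ≤ 0)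
    (hsmall : ∀ ε > 0, ∀ᶠ x in 𝓝[≠] (0 : E), -(ε * Φ (‖x‖ ^ 2)) ≤ v x)
    (hR : ∀ x, ‖x‖ = R → m ≤ v x) : ∀ x ∈ closedBall (0 : E) R \ {0}, m ≤ v x := by
  intro x hx
  have hlim : Tendsto (fun ε => m - ε * Φ (‖x‖ ^ 2)) (𝓝[>] 0) (𝓝 m) := by
    have hcont : Continuous fun ε : ℝ => m - ε * Φ (‖x‖ ^ 2) := by fun_prop
    simpa using (hcont.tendsto 0).mono_left nhdsWithin_le_nhds
  refine le_of_tendsto hlim (eventually_mem_nhdsWithin.mono fun ε (hε : 0 < ε) => ?_)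
  refine hv.le_of_eventually_le (H := fun w => m - ε * Φ (‖w‖ ^ 2)) hp.le hs
    (fun y hy => isStrictSubAt_const_sub_const_mul m hp hσ hε hy.2 hΦ) ?_ (fun z hz => ?_) x hx
  · filter_upwards [hsmall ε hε] with y hy
    linarith
  · have : 0 ≤ ε * Φ (‖z‖ ^ 2) := mul_nonneg hε.le (by rwa [hz])
    linarith [hR z hz]

variable {N : ℕ} {t : ℝ}

/-- The fundamental solution `mup N p` as a function of `t = |x|²`. -/
noncomputable def mupProfile (N : ℕ) (p t : ℝ) : ℝ :=
  if p < N then (p - 1) / (N - p) * t ^ ((p - N) / (2 * (p - 1))) else -Real.log t / 2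

lemma mup_eq_mupProfile (N : ℕ) (p : ℝ) (x : EuclideanSpace ℝ (Fin N)) :
    mup N p x = mupProfile N p (‖x‖ ^ 2) := by
  have hexp : (2 : ℕ) * ((p - N) / (2 * (p - 1))) = (p - N) / (p - 1) := by
    rw [Nat.cast_ofNat, ← mul_div_assoc, mul_div_mul_left _ _ two_ne_zero]
  rw [mup, mupProfile, ← Real.rpow_natCast_mul (norm_nonneg x), hexp, Real.log_pow, Nat.cast_ofNat,
    neg_div, mul_div_cancel_left₀ _ two_ne_zero]

lemma hasDerivAt_mupProfile (hp : 1 < p) (hpN : p ≤ N) (ht : 0 < t) :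
    HasDerivAt (mupProfile N p) (-(t ^ (-((N + p - 2) / (2 * (p - 1))))) / 2) t := by
  have hp' : p - 1 ≠ 0 := by linarith
  rcases hpN.lt_or_eq with hlt | rfl
  · have hNp : (N : ℝ) - p ≠ 0 := by linarith
    simp only [funext fun t => show mupProfile N p t = _ from if_pos hlt]
    refine ((Real.hasDerivAt_rpow_const (Or.inl ht.ne')).const_mul _).congr_deriv ?_
    rw [show (p - N) / (2 * (p - 1)) - 1 = -((N + p - 2) / (2 * (p - 1))) by field_simp; ring]
    field_simp
    ring
  · simp only [funext fun t => show mupProfile N N t = _ from if_neg (lt_irrefl _)]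
    refine ((Real.hasDerivAt_log ht.ne').neg.div_const 2).congr_deriv ?_
    rw [show ((N : ℝ) + N - 2) / (2 * (N - 1)) = 1 by field_simp; ring, Real.rpow_neg_one]

lemma mupProfile_pos (hp : 1 < p) (ht : t ∈ Ioo (0 : ℝ) 1) : 0 < mupProfile N p t := by
  rw [mupProfile]
  split_ifs with hlt
  · have := Real.rpow_pos_of_pos ht.1 ((p - N) / (2 * (p - 1)))
    exact mul_pos (div_pos (by linarith) (by linarith)) this
  · linarith [Real.log_neg ht.1 ht.2]

lemma eventually_mup_pos (hp : 1 < p) :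
    ∀ᶠ x in 𝓝[≠] (0 : EuclideanSpace ℝ (Fin N)), 0 < mup N p x := by
  filter_upwards [tendsto_norm_sq_nhdsNE_zero.eventually (Ioo_mem_nhdsGT one_pos)] with x hx
  rw [mup_eq_mupProfile]
  exact mupProfile_pos hp hx

theorem IsNormalizedSolution.exists_le_of_tendsto_div_mup {Ω : Set (EuclideanSpace ℝ (Fin N))}
    {u : EuclideanSpace ℝ (Fin N) → ℝ} (hu : IsNormalizedSolution p s σ (Ω \ {0}) u)
    (hp : 1 < p) (hpN : p ≤ N) (hs : s ≠ 0) (hσ : 0 < σ) (hΩ : Ω ∈ 𝓝 0)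
    (hlim : Tendsto (fun x => u x / mup N p x) (𝓝[≠] 0) (𝓝 0)) :
    ∃ a, ∀ᶠ x in 𝓝[≠] (0 : EuclideanSpace ℝ (Fin N)), u x ≤ a := by
  have hN : 0 < Module.finrank ℝ (EuclideanSpace ℝ (Fin N)) := by
    rw [finrank_euclideanSpace_fin]
    exact_mod_cast (zero_lt_one.trans hp).trans_le hpN
  have : Nontrivial (EuclideanSpace ℝ (Fin N)) := Module.nontrivial_of_finrank_pos hN
  obtain ⟨R, hball, hR⟩ := (((eventually_closedBall_subset hΩ).filter_mono nhdsWithin_le_nhds).and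
    (Ioo_mem_nhdsGT (zero_lt_one' ℝ))).exists
  have hv : IsNormalizedSolution p s (-σ) (closedBall 0 R \ {0}) (fun x => -u x) :=
    (hu.mono (sdiff_subset_sdiff_left hball)).neg
  have hsphere : sphere (0 : EuclideanSpace ℝ (Fin N)) R ⊆ closedBall 0 R \ {0} := fun z hz =>
    ⟨sphere_subset_closedBall hz, ne_of_mem_sphere hz hR.1.ne'⟩
  obtain ⟨a, ha⟩ := (isCompact_sphere (0 : EuclideanSpace ℝ (Fin N)) R).bddBelow_image
    (hv.continuousOn.mono hsphere)
  have hmain := hv.le_of_forall_eventually_neg_mul_le (Φ := mupProfile N p) (m := min a 0) hp hs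
    (neg_lt_zero.2 hσ)
    (fun t ht => by
      rw [finrank_euclideanSpace_fin]
      exact hasDerivAt_mupProfile hp hpN ht)
    (mupProfile_pos hp ⟨pow_pos hR.1 2, by nlinarith [hR.1, hR.2]⟩).le (min_le_right _ _)
    (fun ε hε => by
      filter_upwards [hlim.eventually_lt_const hε, eventually_mup_pos hp] with x hlt hpos
      rw [← mup_eq_mupProfile, neg_le_neg_iff]
      exact ((div_lt_iff₀ hpos).1 hlt).le)
    (fun x hx => (min_le_left _ _).trans
      (ha (mem_image_of_mem _ (mem_sphere_zero_iff_norm.2 hx))))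
  refine ⟨-min a 0, ?_⟩
  filter_upwards [self_mem_nhdsWithin, mem_nhdsWithin_of_mem_nhds (closedBall_mem_nhds _ hR.1)]
    with x hx0 hxR
  exact le_neg_of_le_neg (hmain x ⟨hxR, hx0⟩)

end Fundamental

section StrongSolution

lemma hasFDerivAt_norm_rpow_smul {E : Type*} [NormedAddCommGroup E] [InnerProductSpace ℝ E]
    {Y : E → E} {M : E →L[ℝ] E} {x : E} (a : ℝ) (hY : HasFDerivAt Y M x) (h0 : Y x ≠ 0) :
    HasFDerivAt (fun y => ‖Y y‖ ^ a • Y y)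
      (‖Y x‖ ^ a • (M + a • ((innerSL ℝ (normalize (Y x))).comp M).smulRight (normalize (Y x))))
      x := by
  have hpos : 0 < ‖Y x‖ := norm_pos_iff.2 h0
  have hsq : ∀ (y : E) (b : ℝ), (‖Y y‖ ^ 2) ^ (b / 2) = ‖Y y‖ ^ b := fun y b => by
    rw [← Real.rpow_natCast_mul (norm_nonneg _), Nat.cast_ofNat, mul_div_cancel₀ _ two_ne_zero]
  have hderiv := (hY.norm_sq.rpow_const (p := a / 2) (Or.inl (by positivity))).smul hY
  simp only [hsq] at hderiv
  refine hderiv.congr_fderiv ?_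
  rw [show a / 2 - 1 = (a - 2) / 2 by ring, hsq, Real.rpow_sub hpos, Real.rpow_two]
  ext v
  simp only [add_apply, smul_apply, ContinuousLinearMap.smulRight_apply,
    ContinuousLinearMap.comp_apply, innerSL_apply_apply, nsmul_eq_mul, Nat.cast_ofNat, smul_eq_mul,
    smul_add, smul_smul, NormedSpace.normalize, real_inner_smul_left]
  congr 2
  field_simp

lemma trace_fderiv_norm_rpow_smul {E : Type*} [NormedAddCommGroup E] [InnerProductSpace ℝ E]
    [FiniteDimensional ℝ E] {Y : E → E} {x : E} (p : ℝ) (hY : DifferentiableAt ℝ Y x)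
    (h0 : Y x ≠ 0) :
    LinearMap.trace ℝ E (fderiv ℝ (fun y => ‖Y y‖ ^ (p - 2) • Y y) x : E →ₗ[ℝ] E)
      = ‖Y x‖ ^ (p - 2) * normalizedPLaplacian p (fderiv ℝ Y x) (normalize (Y x)) := by
  set ν := normalize (Y x)
  have htrace : LinearMap.trace ℝ E
      (((innerSL ℝ ν).comp (fderiv ℝ Y x)).smulRight ν : E →ₗ[ℝ] E) = inner ℝ (fderiv ℝ Y x ν) ν :=
    (LinearMap.trace_smulRight _ _).trans (real_inner_comm _ _)
  rw [(hasFDerivAt_norm_rpow_smul (p - 2) hY.hasFDerivAt h0).fderiv, normalizedPLaplacian]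
  rw [ContinuousLinearMap.toLinearMap_smul, ContinuousLinearMap.toLinearMap_add,
    ContinuousLinearMap.toLinearMap_smul, map_smul, map_add, map_smul, htrace, smul_eq_mul,
    smul_eq_mul]

theorem IsStrongSolution.isNormalizedSolution {N : ℕ} {p q : ℝ}
    {G : Set (EuclideanSpace ℝ (Fin N))} {u : EuclideanSpace ℝ (Fin N) → ℝ}
    (h : IsStrongSolution p q G u) (hG : IsOpen G) : IsNormalizedSolution p (q - p + 2) 1 G u := by
  obtain ⟨h1, h3, heq⟩ := h
  have hu : ∀ x ∈ G, ContDiffAt ℝ 1 u x := fun x hx => h1.contDiffAt (hG.mem_nhds hx)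
  have hregular : ∀ x ∈ G, gradient u x ≠ 0 → ContDiffAt ℝ 3 u x := fun x hx hne =>
    have hcont : ContinuousAt (gradient u) x :=
      (contDiffAt_gradient (m := 0) (hu x hx) (by simp)).continuousAt
    h3.contDiffAt ((hG.eventually_mem hx).and (hcont.eventually_ne hne))
  refine ⟨fun x hx => (hu x hx).differentiableAt one_ne_zero,
    fun x hx hne => (hregular x hx hne).of_le (by norm_num), fun x hx hne => ?_⟩
  have hpos : 0 < ‖gradient u x‖ := norm_pos_iff.2 hne
  have hgrad : DifferentiableAt ℝ (gradient u) x :=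
    (contDiffAt_gradient (m := 2) (hregular x hx hne) (by norm_num)).differentiableAt two_ne_zero
  refine mul_left_cancel₀ (Real.rpow_pos_of_pos hpos (p - 2)).ne' ?_
  rw [← trace_fderiv_norm_rpow_smul p hgrad hne, one_mul, ← Real.rpow_add hpos,
    show p - 2 + (q - p + 2) = q by ring]
  exact (heq x hx).2

end StrongSolution

section Uniqueness

variable {E : Type*} [NormedAddCommGroup E] [InnerProductSpace ℝ E] [FiniteDimensional ℝ E]
  {p s c : ℝ} {Ω : Set E} {u₁ u₂ : E → ℝ}

/-- `u` is a nonnegative solution in `Ω`, with source term `|∇u|^s` and a possible singularity at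
the origin, and is continuous up to the boundary away from the origin. -/
structure IsNonnegSolution (p s : ℝ) (Ω : Set E) (u : E → ℝ) : Prop where
  isNormalizedSolution : IsNormalizedSolution p s 1 (Ω \ {0}) u
  nonneg : ∀ x ∈ Ω \ {0}, 0 ≤ u x
  continuousOn : ContinuousOn u (closure Ω \ {0})

lemma IsNormalizedSolution.exists_lt_one_const_mul {D : Set E} {u : E → ℝ}
    (h : IsNormalizedSolution p s 1 D u) (hs : 1 < s) (hc : 1 < c) :
    ∃ σ < 1, IsNormalizedSolution p s σ D (fun x => c * u x) := by
  have hc0 : 0 < c := by linarith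
  refine ⟨_, ?_, h.const_mul hc0.ne'⟩
  rw [mul_one, abs_of_pos hc0, ← Real.rpow_one_add' hc0.le (by linarith)]
  exact Real.rpow_lt_one_of_one_lt_of_neg hc (by linarith)

lemma IsNonnegSolution.nonneg_of_mem_frontier {u : E → ℝ} (h : IsNonnegSolution p s Ω u)
    (hΩ : IsOpen Ω) (h0 : 0 ∈ Ω) {x : E} (hx : x ∈ frontier Ω) : 0 ≤ u x := by
  rw [hΩ.frontier_eq] at hx
  have hx0 : x ∈ ({0}ᶜ : Set E) := fun hx0 => hx.2 (mem_singleton_iff.1 hx0 ▸ h0)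
  have : (𝓝[Ω \ {0}] x).NeBot :=
    mem_closure_iff_nhdsWithin_neBot.1 (isOpen_compl_singleton.closure_inter ⟨hx.1, hx0⟩)
  exact ge_of_tendsto ((h.continuousOn x ⟨hx.1, hx0⟩).mono
    (sdiff_subset_sdiff_left subset_closure)) (eventually_nhdsWithin_of_forall h.nonneg)

theorem IsNonnegSolution.le_const_mul_of_eventually_le
    (hpar : IsSubcritical (Module.finrank ℝ E) p s) (h₁ : IsNonnegSolution p s Ω u₁)
    (h₂ : IsNonnegSolution p s Ω u₂) (hΩ : IsOpen Ω) (hb : Bornology.IsBounded Ω) (hc : 1 < c)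
    (hbd : ∀ x ∈ frontier Ω, u₂ x ≤ c * u₁ x)
    (hnear : ∀ᶠ x in 𝓝[≠] (0 : E), u₂ x ≤ c * u₁ x) : ∀ x ∈ Ω \ {0}, u₂ x ≤ c * u₁ x := by
  intro x hx
  obtain ⟨σ, hσ, hV⟩ := h₁.isNormalizedSolution.exists_lt_one_const_mul hpar.one_lt_s hc
  obtain ⟨δ, hδ, hball⟩ := Metric.eventually_nhds_iff_ball.1 (eventually_nhdsWithin_iff.1 hnear)
  obtain ⟨r, hr0, hr⟩ := exists_between (lt_min hδ (norm_pos_iff.2 hx.2))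
  obtain ⟨hrδ, hrx⟩ := lt_min_iff.1 hr
  set C := closure Ω \ ball 0 r
  set D := Ω \ closedBall 0 r
  have hC0 : (0 : E) ∉ C := fun h => h.2 (mem_ball_self hr0)
  have hDC : D ⊆ C := sdiff_subset_sdiff subset_closure ball_subset_closedBall
  have hD0 : (0 : E) ∉ D := fun h => hC0 (hDC h)
  have hDΩ : D \ {0} ⊆ Ω \ {0} := sdiff_subset_sdiff_left sdiff_subset
  have hCΩ : C \ {0} ⊆ closure Ω \ {0} := sdiff_subset_sdiff_left sdiff_subset
  refine IsPuncturedSolution.le_of_le_boundary hpar hσ (hb.isCompact_closure.diff isOpen_ball)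
    (hΩ.sdiff isClosed_closedBall) hDC (fun h => (hC0 h).elim)
    ⟨h₂.isNormalizedSolution.neg.mono hDΩ, fun h => (hD0 h).elim, fun h => (hD0 h).elim⟩
    ⟨hV.mono hDΩ, fun h => (hD0 h).elim, fun h => (hD0 h).elim⟩ (h₂.continuousOn.mono hCΩ)
    ((h₁.continuousOn.mono hCΩ).const_mul c) (fun y hy => ?_) x
    ⟨subset_closure hx.1, by simpa using hrx.le⟩
  by_cases hyΩ : y ∈ Ω
  · have hyr : y ∈ closedBall 0 r := by_contra fun h => hy.2 ⟨hyΩ, h⟩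
    exact hball y (closedBall_subset_ball hrδ hyr) fun h => hC0 (h ▸ hy.1)
  · exact hbd y (hΩ.frontier_eq ▸ ⟨hy.1.1, hyΩ⟩)

theorem IsNonnegSolution.le_const_mul_of_eventually_le_const
    (hpar : IsSubcritical (Module.finrank ℝ E) p s) (h₁ : IsNonnegSolution p s Ω u₁)
    (h₂ : IsNonnegSolution p s Ω u₂) (hΩ : IsOpen Ω) (hb : Bornology.IsBounded Ω) (h0 : 0 ∈ Ω)
    (hc : 1 < c) (hbd : ∀ x ∈ frontier Ω, u₂ x ≤ c * u₁ x) {a₁ a₂ : ℝ}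
    (ha₁ : ∀ᶠ x in 𝓝[≠] (0 : E), u₁ x ≤ a₁) (ha₂ : ∀ᶠ x in 𝓝[≠] (0 : E), u₂ x ≤ a₂) :
    ∀ x ∈ Ω \ {0}, u₂ x ≤ c * u₁ x := by
  have := hpar.nontrivial
  have hc0 : 0 < c := by linarith
  have hmem : ∀ᶠ x in 𝓝[≠] (0 : E), x ∈ Ω \ {0} :=
    inter_mem (mem_nhdsWithin_of_mem_nhds (hΩ.mem_nhds h0)) self_mem_nhdsWithin
  obtain ⟨σ, hσ, hσV⟩ := h₁.isNormalizedSolution.exists_lt_one_const_mul hpar.one_lt_s hc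
  obtain ⟨V, hVeq, hV⟩ := hσV.exists_isPuncturedSolution hΩ
    (hmem.mono fun x hx => mul_nonneg hc0.le (h₁.nonneg x hx))
    (ha₁.mono fun x hx => mul_le_mul_of_nonneg_left hx hc0.le)
  obtain ⟨U, hUeq, hU⟩ := h₂.isNormalizedSolution.neg.exists_isPuncturedSolution hΩ
    (ha₂.mono fun x hx => neg_le_neg hx)
    (hmem.mono fun x hx => neg_nonpos.2 (h₂.nonneg x hx))
  have hsub : closure Ω \ {0} ⊆ {0}ᶜ := fun x hx => hx.2
  have hle := IsPuncturedSolution.le_of_le_boundary hpar hσ (U := fun x => -U x)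
    hb.isCompact_closure hΩ subset_closure (fun _ => h0) (by simpa only [neg_neg] using hU) hV
    (h₂.continuousOn.neg.congr (hUeq.mono hsub)).neg
    ((h₁.continuousOn.const_mul c).congr (hVeq.mono hsub)) fun y hy => by
      have hy0 : y ∈ ({0}ᶜ : Set E) := fun h => hy.2 (mem_singleton_iff.1 h ▸ h0)
      rw [hVeq hy0, hUeq hy0, neg_neg]
      exact hbd y (hΩ.frontier_eq ▸ hy)
  intro x hx
  have := hle x (subset_closure hx.1)
  rwa [hVeq hx.2, hUeq hx.2, neg_neg] at this

lemma IsNonnegSolution.le_const_mul_of_mem_frontier (h₁ : IsNonnegSolution p s Ω u₁)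
    (hΩ : IsOpen Ω) (h0 : 0 ∈ Ω) (hbd : EqOn u₁ u₂ (frontier Ω)) (hc : 1 ≤ c) :
    ∀ x ∈ frontier Ω, u₂ x ≤ c * u₁ x := fun _ hx =>
  (hbd hx).ge.trans (le_mul_of_one_le_left (h₁.nonneg_of_mem_frontier hΩ h0 hx) hc)

lemma IsNonnegSolution.eqOn_of_le_const_mul (h₁ : IsNonnegSolution p s Ω u₁)
    (h₂ : IsNonnegSolution p s Ω u₂) (hle₁ : ∀ c > 1, ∀ x ∈ Ω \ {0}, u₁ x ≤ c * u₂ x)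
    (hle₂ : ∀ c > 1, ∀ x ∈ Ω \ {0}, u₂ x ≤ c * u₁ x) : EqOn u₁ u₂ (Ω \ {0}) := fun x hx =>
  le_antisymm
    ((le_iff_forall_one_lt_le_mul₀ (h₂.nonneg x hx)).2 fun c hc =>
      (hle₁ c hc x hx).trans_eq (mul_comm _ _))
    ((le_iff_forall_one_lt_le_mul₀ (h₁.nonneg x hx)).2 fun c hc =>
      (hle₂ c hc x hx).trans_eq (mul_comm _ _))

lemma eventually_le_const_mul_of_tendsto_mul {α : Type*} {l : Filter α} {g f₁ f₂ : α → ℝ} {L : ℝ}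
    (hL : 0 < L) (hc : 1 < c) (hg : ∀ᶠ x in l, 0 < g x)
    (h₁ : Tendsto (fun x => g x * f₁ x) l (𝓝 L)) (h₂ : Tendsto (fun x => g x * f₂ x) l (𝓝 L)) :
    ∀ᶠ x in l, f₂ x ≤ c * f₁ x := by
  filter_upwards [hg, h₂.eventually_lt (h₁.const_mul c) (lt_mul_of_one_lt_left hL hc)]
    with x hpos hlt
  rw [mul_left_comm] at hlt
  exact (lt_of_mul_lt_mul_left hlt hpos.le).le

theorem IsNonnegSolution.eqOn_of_tendsto_mul {g : E → ℝ} {L : ℝ}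
    (hpar : IsSubcritical (Module.finrank ℝ E) p s) (h₁ : IsNonnegSolution p s Ω u₁)
    (h₂ : IsNonnegSolution p s Ω u₂) (hΩ : IsOpen Ω) (hb : Bornology.IsBounded Ω) (h0 : 0 ∈ Ω)
    (hbd : EqOn u₁ u₂ (frontier Ω)) (hL : 0 < L) (hg : ∀ᶠ x in 𝓝[≠] 0, 0 < g x)
    (hg₁ : Tendsto (fun x => g x * u₁ x) (𝓝[≠] 0) (𝓝 L))
    (hg₂ : Tendsto (fun x => g x * u₂ x) (𝓝[≠] 0) (𝓝 L)) : EqOn u₁ u₂ (Ω \ {0}) :=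
  h₁.eqOn_of_le_const_mul h₂
    (fun _ hc => h₂.le_const_mul_of_eventually_le hpar h₁ hΩ hb hc
      (h₂.le_const_mul_of_mem_frontier hΩ h0 hbd.symm hc.le)
      (eventually_le_const_mul_of_tendsto_mul hL hc hg hg₂ hg₁))
    (fun _ hc => h₁.le_const_mul_of_eventually_le hpar h₂ hΩ hb hc
      (h₁.le_const_mul_of_mem_frontier hΩ h0 hbd hc.le)
      (eventually_le_const_mul_of_tendsto_mul hL hc hg hg₁ hg₂))

theorem IsNonnegSolution.eqOn_of_eventually_le_const {a₁ a₂ : ℝ}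
    (hpar : IsSubcritical (Module.finrank ℝ E) p s) (h₁ : IsNonnegSolution p s Ω u₁)
    (h₂ : IsNonnegSolution p s Ω u₂) (hΩ : IsOpen Ω) (hb : Bornology.IsBounded Ω) (h0 : 0 ∈ Ω)
    (hbd : EqOn u₁ u₂ (frontier Ω)) (ha₁ : ∀ᶠ x in 𝓝[≠] 0, u₁ x ≤ a₁)
    (ha₂ : ∀ᶠ x in 𝓝[≠] 0, u₂ x ≤ a₂) : EqOn u₁ u₂ (Ω \ {0}) :=
  h₁.eqOn_of_le_const_mul h₂
    (fun _ hc => h₂.le_const_mul_of_eventually_le_const hpar h₁ hΩ hb h0 hc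
      (h₂.le_const_mul_of_mem_frontier hΩ h0 hbd.symm hc.le) ha₂ ha₁)
    (fun _ hc => h₁.le_const_mul_of_eventually_le_const hpar h₂ hΩ hb h0 hc
      (h₁.le_const_mul_of_mem_frontier hΩ h0 hbd hc.le) ha₁ ha₂)

end Uniqueness

section Exponents

variable {n p q : ℝ}

lemma isSubcritical_of_lt_div (hn : 2 ≤ n) (hp : 1 < p) (hpn : p ≤ n) (hq : p - 1 < q)
    (hqc : q < n * (p - 1) / (n - 1)) : IsSubcritical n p (q - p + 2) := by
  rw [lt_div_iff₀ (by linarith)] at hqc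
  exact ⟨hn, hp, hpn, by linarith, by linarith⟩

lemma singularCoefficient_pos (hn : 2 ≤ n) (hpn : p ≤ n) (hq : p - 1 < q)
    (hqc : q < n * (p - 1) / (n - 1)) :
    0 < ((p - q) / (q + 1 - p))⁻¹ * ((n * (p - 1) - (n - 1) * q) / (q + 1 - p)) ^
      (1 / (q + 1 - p)) := by
  rw [lt_div_iff₀ (by linarith)] at hqc
  have hqp : 0 < p - q := by nlinarith
  have hq0 : 0 < q + 1 - p := by linarith
  have hb : 0 < n * (p - 1) - (n - 1) * q := by linarith
  positivity

end Exponents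

/-- Uniqueness: a nonnegative solution is determined by its boundary data and its
behaviour at the isolated singularity. -/
theorem uniqueness_singular_solutions (N : ℕ) (hN : 2 ≤ N) (p q : ℝ) (hp1 : 1 < p)
    (hpN : p ≤ N) (hq1 : p - 1 < q) (hq2 : q < (N : ℝ) * (p - 1) / ((N : ℝ) - 1))
    (Ω : Set (EuclideanSpace ℝ (Fin N))) (hΩ : IsOpen Ω) (hb : Bornology.IsBounded Ω)
    (h0 : (0 : EuclideanSpace ℝ (Fin N)) ∈ Ω)
    (u₁ u₂ : EuclideanSpace ℝ (Fin N) → ℝ)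
    (hu₁ : IsStrongSolution p q (Ω \ {0}) u₁) (hu₂ : IsStrongSolution p q (Ω \ {0}) u₂)
    (hpos₁ : ∀ x ∈ Ω \ {0}, 0 ≤ u₁ x) (hpos₂ : ∀ x ∈ Ω \ {0}, 0 ≤ u₂ x)
    (hc₁ : ContinuousOn u₁ (closure Ω \ {0})) (hc₂ : ContinuousOn u₂ (closure Ω \ {0}))
    (hbd : Set.EqOn u₁ u₂ (frontier Ω))
    (hsing :
      (∃ k : ℝ, 0 ≤ k ∧
        Filter.Tendsto (fun x => u₁ x / mup N p x) (𝓝[≠] (0 : EuclideanSpace ℝ (Fin N)))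
          (nhds k) ∧
        Filter.Tendsto (fun x => u₂ x / mup N p x) (𝓝[≠] (0 : EuclideanSpace ℝ (Fin N)))
          (nhds k)) ∨
      (Filter.Tendsto (fun x => ‖x‖ ^ ((p - q) / (q + 1 - p)) * u₁ x)
          (𝓝[≠] (0 : EuclideanSpace ℝ (Fin N)))
          (nhds (((p - q) / (q + 1 - p))⁻¹
            * (((N : ℝ) * (p - 1) - ((N : ℝ) - 1) * q) / (q + 1 - p)) ^ (1 / (q + 1 - p)))) ∧
        Filter.Tendsto (fun x => ‖x‖ ^ ((p - q) / (q + 1 - p)) * u₂ x)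
          (𝓝[≠] (0 : EuclideanSpace ℝ (Fin N)))
          (nhds (((p - q) / (q + 1 - p))⁻¹
            * (((N : ℝ) * (p - 1) - ((N : ℝ) - 1) * q) / (q + 1 - p)) ^ (1 / (q + 1 - p)))))) :
    Set.EqOn u₁ u₂ (Ω \ {0}) := by
  have hN2 : (2 : ℝ) ≤ N := by exact_mod_cast hN
  have hpar : IsSubcritical (Module.finrank ℝ (EuclideanSpace ℝ (Fin N))) p (q - p + 2) := by
    simpa only [finrank_euclideanSpace_fin] using isSubcritical_of_lt_div hN2 hp1 hpN hq1 hq2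
  have hopen : IsOpen (Ω \ {0}) := hΩ.sdiff isClosed_singleton
  have h₁ : IsNonnegSolution p (q - p + 2) Ω u₁ := ⟨hu₁.isNormalizedSolution hopen, hpos₁, hc₁⟩
  have h₂ : IsNonnegSolution p (q - p + 2) Ω u₂ := ⟨hu₂.isNormalizedSolution hopen, hpos₂, hc₂⟩
  rcases hsing with ⟨k, hk, hk₁, hk₂⟩ | ⟨hlim₁, hlim₂⟩
  · rcases hk.eq_or_lt with rfl | hk
    · have hs : q - p + 2 ≠ 0 := by linarith
      obtain ⟨a₁, ha₁⟩ := h₁.isNormalizedSolution.exists_le_of_tendsto_div_mup hp1 hpN hs one_pos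
        (hΩ.mem_nhds h0) hk₁
      obtain ⟨a₂, ha₂⟩ := h₂.isNormalizedSolution.exists_le_of_tendsto_div_mup hp1 hpN hs one_pos
        (hΩ.mem_nhds h0) hk₂
      exact h₁.eqOn_of_eventually_le_const hpar h₂ hΩ hb h0 hbd ha₁ ha₂
    · simp only [div_eq_inv_mul] at hk₁ hk₂
      exact h₁.eqOn_of_tendsto_mul hpar h₂ hΩ hb h0 hbd hk
        ((eventually_mup_pos hp1).mono fun x hx => inv_pos.2 hx) hk₁ hk₂
  · refine h₁.eqOn_of_tendsto_mul hpar h₂ hΩ hb h0 hbd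
      (singularCoefficient_pos hN2 hpN hq1 hq2) ?_ hlim₁ hlim₂
    exact eventually_mem_nhdsWithin.mono fun x hx => Real.rpow_pos_of_pos (norm_pos_iff.2 hx) _
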